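/- arXiv:2509.15438 — 6 statements merged into one kernel-verified Lean document; each statement's English description precedes it below -/
import Mathlib

section
/- Let k be a field, A a commutative k-algebra with a 𝔾ₐ-coaction β, and let y₁,…,y_m ∈ A^{𝔾ₐ} be invariant elements that are linearly independent over k. If x ∈ A satisfies β(x) = x + Σ_{i=1}^{m} c_i(t)·y_i for some polynomials c_i(t) ∈ k[t], then every c_i(t) is an additive polynomial. -/
open Polynomial

/-- Substitute `t ↦ t₁ + t₂` into a polynomial, landing in `R[t₁][t₂]`
(inner variable `t₁`, outer variable `t₂`). -/
noncomputable def coaddSubst {R : Type*} [CommSemiring R] (p : Polynomial R) :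
    Polynomial (Polynomial R) :=
  p.eval₂ ((Polynomial.C : Polynomial R →+* Polynomial (Polynomial R)).comp
      (Polynomial.C : R →+* Polynomial R))
    (Polynomial.C Polynomial.X + Polynomial.X)

/-- A 𝔾ₐ-coaction on a commutative `k`-algebra `A`: a `k`-algebra homomorphism
`β : A → A[t]` satisfying the counit and coassociativity axioms. -/
def IsGaCoaction {k A : Type*} [CommSemiring k] [CommSemiring A] [Algebra k A]
    (β : A →ₐ[k] Polynomial A) : Prop :=
  (∀ a : A, (β a).eval 0 = a) ∧
  (∀ a : A, coaddSubst (β a) = (β a).map β.toRingHom)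

/-- `c(t) ∈ k[t]` is additive: `c(t₁+t₂) = c(t₁) + c(t₂)` in `k[t₁][t₂]`. -/
def IsAdditivePoly {k : Type*} [CommSemiring k] (c : Polynomial k) : Prop :=
  coaddSubst c = Polynomial.C c + c.map (Polynomial.C : k →+* Polynomial k)

/-!
Comparing the coefficients of the `yᵢ` in the two sides of the coassociativity identity at `x`,
`x + ∑ cᵢ(t₁ + t₂) yᵢ = (x + ∑ cᵢ(t₁) yᵢ) + ∑ cᵢ(t₂) yᵢ`, turns it into additivity of every `cᵢ`,
because the `yᵢ` stay linearly independent after adjoining the variables `t₁` and `t₂`.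
-/

section Polynomial

variable {R S ι : Type*}

instance instIsCancelAddPolynomial [Semiring R] [IsCancelAdd R] : IsCancelAdd R[X] :=
  (toFinsuppIso R).injective.isCancelAdd _ (map_add _)

theorem injective_sum_map_mul_C [Semiring R] [Semiring S] [Fintype ι] {f : R →+* S} {y : ι → S}
    (h : Function.Injective fun a : ι → R ↦ ∑ i, f (a i) * y i) :
    Function.Injective fun p : ι → R[X] ↦ ∑ i, (p i).map f * C (y i) := by
  intro p q hpq
  have coeff_eq (n : ℕ) : (fun i ↦ (p i).coeff n) = fun i ↦ (q i).coeff n := by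
    apply h
    simpa only [finsetSum_coeff, coeff_mul_C, coeff_map] using congrArg (coeff · n) hpq
  ext i n
  exact congrFun (coeff_eq n) i

theorem injective_sum_map_mapRingHom_mul_C_C [CommSemiring R] [Semiring S]
    [Algebra R S] [Fintype ι] {y : ι → S} (hy : LinearIndependent R y) :
    Function.Injective fun P : ι → R[X][X] ↦
      ∑ i, (P i).map (mapRingHom (algebraMap R S)) * C (C (y i)) := by
  refine injective_sum_map_mul_C (injective_sum_map_mul_C fun a b hab ↦ ?_)
  simp only [← Algebra.smul_def] at hab
  exact funext (Fintype.linearIndependent_iffₛ.1 hy a b hab)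

end Polynomial

section coaddSubst

variable {R S ι : Type*} [CommSemiring R] [CommSemiring S]

variable (R) in
/-- The substitution `t ↦ t₁ + t₂` as a ring homomorphism `R[t] → R[t₁][t₂]`: the bundled form of
`coaddSubst`, through which it is seen to commute with the ring operations. -/
noncomputable def coaddSubstHom : R[X] →+* R[X][X] :=
  eval₂RingHom (C.comp C) (C X + X)

theorem coaddSubstHom_apply (p : R[X]) : coaddSubstHom R p = coaddSubst p := rfl

theorem coaddSubst_C (a : R) : coaddSubst (C a) = C (C a) := eval₂_C _ _

theorem coaddSubst_map (f : R →+* S) (p : R[X]) :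
    coaddSubst (p.map f) = (coaddSubst p).map (mapRingHom f) := by
  rw [coaddSubst, coaddSubst, eval₂_map, ← coe_mapRingHom, hom_eval₂]
  congr 1
  · ext; simp
  · simp

theorem coaddSubst_C_add_sum_map_mul_C [Fintype ι] (f : R →+* S) (x : S) (p : ι → R[X])
    (y : ι → S) :
    coaddSubst (C x + ∑ i, (p i).map f * C (y i)) =
      C (C x) + ∑ i, (coaddSubst (p i)).map (mapRingHom f) * C (C (y i)) := by
  simp only [← coaddSubstHom_apply, map_add, map_sum, map_mul]
  simp only [coaddSubstHom_apply, coaddSubst_C, coaddSubst_map]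

end coaddSubst

section Coaction

variable {k A ι : Type*} [CommSemiring k] [CommSemiring A] [Algebra k A] {β : A →ₐ[k] A[X]}

variable (β) in
theorem map_toRingHom_map_algebraMap (p : k[X]) :
    (p.map (algebraMap k A)).map β.toRingHom = (p.map C).map (mapRingHom (algebraMap k A)) := by
  rw [map_map, map_map]
  congr 1
  ext a : 1
  simp [Polynomial.algebraMap_apply]

variable [Fintype ι] {y : ι → A} {c : ι → k[X]} {x : A}

theorem map_toRingHom_of_eq_C_add_sum (hy : ∀ i, β (y i) = C (y i))
    (hx : β x = C x + ∑ i, (c i).map (algebraMap k A) * C (y i)) :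
    (β x).map β.toRingHom =
      C (C x) + ∑ i, (C (c i) + (c i).map C).map (mapRingHom (algebraMap k A)) * C (C (y i)) := by
  have hβy (i : ι) : β.toRingHom (y i) = C (y i) := hy i
  have hβx : β.toRingHom x = C x + ∑ i, (c i).map (algebraMap k A) * C (y i) := hx
  calc (β x).map β.toRingHom
      = C (β.toRingHom x) +
          ∑ i, ((c i).map C).map (mapRingHom (algebraMap k A)) * C (C (y i)) := by
        simp only [hx, Polynomial.map_add, Polynomial.map_sum, Polynomial.map_mul, map_C,
          map_toRingHom_map_algebraMap, hβy]
    _ = C (C x) +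
          ∑ i, (C (c i) + (c i).map C).map (mapRingHom (algebraMap k A)) * C (C (y i)) := by
        simp only [hβx, Polynomial.map_add, map_C, coe_mapRingHom, map_add, map_sum, map_mul,
          add_mul, Finset.sum_add_distrib, add_assoc]

theorem stmt1_general [IsCancelAdd A] (hy : ∀ i, β (y i) = C (y i)) (hli : LinearIndependent k y)
    (hx : β x = C x + ∑ i, (c i).map (algebraMap k A) * C (y i)) :
    coaddSubst (β x) = (β x).map β.toRingHom ↔ ∀ i, IsAdditivePoly (c i) := by
  rw [map_toRingHom_of_eq_C_add_sum hy hx, hx, coaddSubst_C_add_sum_map_mul_C, add_right_inj,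
    (injective_sum_map_mapRingHom_mul_C_C hli).eq_iff, funext_iff]
  rfl

end Coaction

/-- if `y₁,…,y_m ∈ A^{𝔾ₐ}` are `k`-linearly independent invariants
and `β(x) = x + ∑ c_i(t)·y_i`, then every `c_i(t)` is additive. -/
theorem stmt1 {k A : Type*} [Field k] [CommRing A] [Algebra k A]
    (β : A →ₐ[k] Polynomial A) (hβ : IsGaCoaction β)
    {m : ℕ} (y : Fin m → A)
    (hy : ∀ i, β (y i) = Polynomial.C (y i))
    (hli : LinearIndependent k y)
    (c : Fin m → Polynomial k) (x : A)
    (hx : β x = Polynomial.C x +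
      ∑ i : Fin m, (c i).map (algebraMap k A) * Polynomial.C (y i)) :
    ∀ i : Fin m, IsAdditivePoly (c i) :=
  (stmt1_general hy hli hx).1 (hβ.2 x)
end

section
/- Let k be an algebraically closed field, A a finitely generated integral domain over k with a 𝔾ₐ-coaction β, and b(t) ∈ k[t] a nonzero additive polynomial. If for every f ∈ A the element β(f) − f lies in the ideal of A[t] generated by b(t), then β factors through b(t): for every a ∈ A there exists a polynomial P ∈ A[s] such that β(a) = P(b(t)), i.e. β(A) ⊆ A[b(t)]. -/
open Polynomial

/-!
Let `B` be the image of `b` in `A[X]` and `S = A[X] / (B)`. Modulo `B(t₁)`, coassociativity says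
that `β a`, read over `S`, is invariant under translation by the root of `B`, and additivity says
the same about `B` itself. Comparing constant coefficients, a translation-invariant `p` satisfies
`B ∣ p - p(0)`; the quotient is again translation-invariant, because `B` is regular over `S`.
Hence `p` has a `B`-adic expansion with constant coefficients.
-/

section Coaddition

variable {R S : Type*} [CommSemiring R] [CommSemiring S]

theorem coaddSubst_eq_taylor (p : R[X]) : coaddSubst p = taylor X (p.map C) := by
  rw [coaddSubst, taylor_apply, comp, eval₂_map, add_comm]

theorem map_coaddSubst (χ : R[X] →+* S) (p : R[X]) :
    (coaddSubst p).map χ = taylor (χ X) (p.map (χ.comp C)) := by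
  rw [coaddSubst_eq_taylor, map_taylor, Polynomial.map_map]

theorem IsAdditivePoly.taylor_map {c : R[X]} (hc : IsAdditivePoly c) (χ : R[X] →+* S) :
    taylor (χ X) (c.map (χ.comp C)) = C (χ c) + c.map (χ.comp C) := by
  rw [← map_coaddSubst, hc, Polynomial.map_add, map_C, Polynomial.map_map]

theorem IsAdditivePoly.map {c : R[X]} (hc : IsAdditivePoly c) (f : R →+* S) :
    IsAdditivePoly (c.map f) := by
  have hcomp : (mapRingHom f).comp C = C.comp f := mapRingHom_comp_C f
  have h := hc.taylor_map (mapRingHom f)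
  rw [hcomp, coe_mapRingHom, map_X, ← Polynomial.map_map] at h
  rw [IsAdditivePoly, coaddSubst_eq_taylor, h]

end Coaddition

section Additive

variable {R : Type*} [CommRing R] {c : R[X]}

theorem IsAdditivePoly.coeff_zero (hc : IsAdditivePoly c) : c.coeff 0 = 0 := by
  have hcomp : (constantCoeff : R[X] →+* R).comp C = RingHom.id R := by ext; simp
  have h := hc.taylor_map constantCoeff
  rw [hcomp, Polynomial.map_id, constantCoeff_apply, coeff_X_zero, taylor_zero] at h
  exact C_eq_zero.mp (right_eq_add.mp h)

theorem IsAdditivePoly.natDegree_pos (hc : IsAdditivePoly c) (hc0 : c ≠ 0) :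
    0 < c.natDegree := by
  by_contra! hdeg
  refine hc0 ?_
  rw [eq_C_of_natDegree_le_zero hdeg, hc.coeff_zero, C_0]

end Additive

section UnitLeadingCoeff

variable {R S : Type*}

theorem isUnit_leadingCoeff_map [Semiring R] [Semiring S] {b : R[X]}
    (hb : IsUnit b.leadingCoeff) (f : R →+* S) : IsUnit (b.map f).leadingCoeff := by
  nontriviality S
  rw [leadingCoeff_map_eq_of_isUnit_leadingCoeff f hb]
  exact hb.map f

theorem natDegree_lt_natDegree_mul_of_isUnit_leadingCoeff [Semiring R] {b q : R[X]}
    (hb : IsUnit b.leadingCoeff) (hdeg : 0 < b.natDegree) (hq : q ≠ 0) :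
    q.natDegree < (b * q).natDegree := by
  rw [natDegree_mul' (by rwa [Ne, hb.mul_right_eq_zero, leadingCoeff_eq_zero])]
  exact Nat.lt_add_of_pos_left hdeg

theorem isLeftRegular_of_isUnit_leadingCoeff [Ring R] {b : R[X]}
    (hb : IsUnit b.leadingCoeff) : IsLeftRegular b :=
  isLeftRegular_iff_right_eq_zero_of_mul.mpr fun _ ↦
    (isUnit_leadingCoeff_mul_right_eq_zero_iff hb).mp

theorem taylor_eq_self_of_taylor_C_add_mul_eq_self [CommRing R] {r a : R} {b q : R[X]}
    (hreg : IsLeftRegular b) (hb : taylor r b = b)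
    (h : taylor r (C a + b * q) = C a + b * q) : taylor r q = q := by
  rw [map_add, taylor_C, taylor_mul, hb] at h
  exact hreg (add_left_cancel h)

end UnitLeadingCoeff

/-- Over `A[X] / (B)`, the polynomial `p` is invariant under translation by the class of `X`.
Equivalently `p(t₁ + t₂) ≡ p(t₂)` modulo `B(t₁)`, the form in which coassociativity and
additivity are used. -/
def IsTranslationInvariantMod {A : Type*} [CommRing A] (B p : A[X]) : Prop :=
  taylor (AdjoinRoot.root B) (p.map (AdjoinRoot.of B)) = p.map (AdjoinRoot.of B)

section TranslationInvariant

variable {A : Type*} [CommRing A] {B p q : A[X]}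

theorem IsAdditivePoly.isTranslationInvariantMod_self (hB : IsAdditivePoly B) :
    IsTranslationInvariantMod B B := by
  have h := hB.taylor_map (AdjoinRoot.mk B)
  rwa [AdjoinRoot.mk_self, C_0, zero_add] at h

theorem IsGaCoaction.isTranslationInvariantMod {k : Type*} [CommSemiring k] [Algebra k A]
    {β : A →ₐ[k] A[X]} (hβ : IsGaCoaction β)
    (hmem : ∀ f : A, β f - C f ∈ Ideal.span {B}) (a : A) :
    IsTranslationInvariantMod B (β a) := by
  have hmk : (AdjoinRoot.mk B).comp β.toRingHom = AdjoinRoot.of B :=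
    RingHom.ext fun f ↦ AdjoinRoot.mk_eq_mk.mpr (Ideal.mem_span_singleton.mp (hmem f))
  have h := congrArg (Polynomial.map (AdjoinRoot.mk B)) (hβ.2 a)
  rwa [map_coaddSubst, Polynomial.map_map, hmk] at h

theorem IsTranslationInvariantMod.dvd_sub_C_coeff_zero (hp : IsTranslationInvariantMod B p) :
    B ∣ p - C (p.coeff 0) := by
  have h := congrArg (coeff · 0) hp
  simp only [taylor_coeff_zero, eval_map, coeff_map] at h
  rw [← AdjoinRoot.mk_eq_mk, AdjoinRoot.mk_C, ← h, ← AdjoinRoot.aeval_eq, aeval_def,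
    AdjoinRoot.algebraMap_eq]

theorem IsTranslationInvariantMod.of_C_add_mul {a : A} (hlc : IsUnit B.leadingCoeff)
    (hB : IsTranslationInvariantMod B B) (h : IsTranslationInvariantMod B (C a + B * q)) :
    IsTranslationInvariantMod B q := by
  rw [IsTranslationInvariantMod, Polynomial.map_add, map_C, Polynomial.map_mul] at h
  exact taylor_eq_self_of_taylor_C_add_mul_eq_self
    (isLeftRegular_of_isUnit_leadingCoeff (isUnit_leadingCoeff_map hlc _)) hB h

theorem IsTranslationInvariantMod.exists_eq_comp (hp : IsTranslationInvariantMod B p)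
    (hlc : IsUnit B.leadingCoeff) (hdeg : 0 < B.natDegree)
    (hB : IsTranslationInvariantMod B B) : ∃ P : A[X], p = P.comp B := by
  induction hn : p.natDegree using Nat.strong_induction_on generalizing p with
  | h n ih =>
    obtain ⟨q, hpq⟩ := hp.dvd_sub_C_coeff_zero
    have hp_eq : p = C (p.coeff 0) + B * q := by rw [← hpq, add_sub_cancel]
    rcases eq_or_ne q 0 with rfl | hq
    · exact ⟨C (p.coeff 0), by rwa [mul_zero, add_zero, ← C_comp] at hp_eq⟩
    have hqdeg : q.natDegree < n := by
      rw [← hn, ← natDegree_sub_C (p := p) (a := p.coeff 0), hpq]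
      exact natDegree_lt_natDegree_mul_of_isUnit_leadingCoeff hlc hdeg hq
    have hq_inv : IsTranslationInvariantMod B q := .of_C_add_mul hlc hB (hp_eq ▸ hp)
    obtain ⟨Q, rfl⟩ := ih _ hqdeg hq_inv rfl
    exact ⟨C (p.coeff 0) + X * Q, by rwa [add_comp, mul_comp, C_comp, X_comp]⟩

end TranslationInvariant

theorem stmt2_general {k A : Type*} [CommSemiring k] [CommRing A] [Algebra k A]
    (β : A →ₐ[k] A[X]) (hβ : IsGaCoaction β)
    (B : A[X]) (hB : IsAdditivePoly B) (hlc : IsUnit B.leadingCoeff)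
    (hmem : ∀ f : A, β f - C f ∈ Ideal.span {B}) (a : A) :
    ∃ P : A[X], β a = P.comp B := by
  rcases subsingleton_or_nontrivial A with _ | _
  · exact ⟨0, Subsingleton.elim _ _⟩
  have hB0 : B ≠ 0 := leadingCoeff_ne_zero.mp hlc.ne_zero
  exact (hβ.isTranslationInvariantMod hmem a).exists_eq_comp hlc (hB.natDegree_pos hB0)
    hB.isTranslationInvariantMod_self

/-- if `β(f) − f ∈ ⟨b(t)⟩` for every `f ∈ A`, where `b(t)` is a
nonzero additive polynomial, then `β` factors through `b(t)`: `β(A) ⊆ A[b(t)]`. -/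
theorem stmt2 {k : Type*} [Field k] [IsAlgClosed k]
    {A : Type*} [CommRing A] [IsDomain A] [Algebra k A]
    (hfg : Algebra.FiniteType k A)
    (β : A →ₐ[k] Polynomial A) (hβ : IsGaCoaction β)
    (b : Polynomial k) (hb : IsAdditivePoly b) (hb0 : b ≠ 0)
    (hmem : ∀ f : A, β f - Polynomial.C f ∈
      Ideal.span {b.map (algebraMap k A)}) :
    ∀ a : A, ∃ P : Polynomial A, β a = P.comp (b.map (algebraMap k A)) := by
  have hlc : IsUnit b.leadingCoeff := (leadingCoeff_ne_zero.mpr hb0).isUnit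
  exact stmt2_general β hβ _ (hb.map _) (isUnit_leadingCoeff_map hlc _) hmem
end

section
/- Let k be an algebraically closed field and A a finitely generated integral domain over k with a 𝔾ₐ-coaction β. Suppose (g₁,h₁) is a c₁(t)-pair with h₁ ≠ 0 and (g₂,h₂) is a c₂(t)-pair with h₂ ≠ 0, where c₁(t), c₂(t) are additive polynomials. If b₁(t), b₂(t) are additive polynomials and b(t) := b₁(c₁(t)) + b₂(c₂(t)), then there exist g ∈ A and e ∈ ℕ such that (g, (h₁h₂)^e) is a b(t)-pair, i.e. β(g) = g + b(t)·(h₁h₂)^e in A[t]. -/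
open Polynomial

/-- Given an additive polynomial `b(t)`, a `b(t)`-pair is `(g,h)` with `h`
invariant and `β(g) = g + b(t)·h` in `A[t]`. -/
def IsPair {k A : Type*} [CommSemiring k] [CommSemiring A] [Algebra k A]
    (β : A →ₐ[k] Polynomial A) (b : Polynomial k) (g h : A) : Prop :=
  β h = Polynomial.C h ∧
    β g = Polynomial.C g + b.map (algebraMap k A) * Polynomial.C h

/-!
An additive polynomial is additive monomial by monomial: comparing coefficients of `s ^ i` in
`p(s x + s y) = p(s x) + p(s y)` gives `pᵢ (x + y)ⁱ = pᵢ xⁱ + pᵢ yⁱ`. Hence, for a `c`-pair `(g, h)`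
and an additive `b` of degree `n`, the homogenization `∑ bᵢ hⁿ⁻ⁱ gⁱ` is moved by the coaction by
`∑ bᵢ hⁿ⁻ⁱ (c h)ⁱ = b(c) hⁿ`, so it is the first component of a `b ∘ c`-pair. A `b₁ ∘ c₁`-pair and
a `b₂ ∘ c₂`-pair are then added as fractions, by cross-multiplying, and an invariant
factor turns the denominator `h₁ ^ n₁ * h₂ ^ n₂` into a power of `h₁ * h₂`.
-/

section AdditivePolynomial

variable {R S : Type*} [CommSemiring R] [CommSemiring S] [Algebra R S] {p : R[X]}

theorem isAdditivePoly_iff_aeval :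
    IsAdditivePoly p ↔ aeval (C X + X : R[X][X]) p = aeval (C X) p + aeval X p := by
  have aeval_C_X : aeval (C X : R[X][X]) p = C p :=
    (aeval_algebraMap_apply R[X][X] X p).trans (congrArg C (aeval_X_left_apply p))
  have aeval_X : aeval (X : R[X][X]) p = p.map C := rfl
  have aeval_C_X_add_X : aeval (C X + X : R[X][X]) p = coaddSubst p := rfl
  rw [aeval_C_X, aeval_X, aeval_C_X_add_X, IsAdditivePoly]

namespace IsAdditivePoly

theorem aeval_add (hp : IsAdditivePoly p) (x y : S) :
    aeval (x + y) p = aeval x p + aeval y p := by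
  simpa only [← aeval_algHom_apply, map_add, aevalAeval_X, aevalAeval_Y] using
    congrArg (aevalAeval x y) (isAdditivePoly_iff_aeval.mp hp)

theorem coeff_mul_add_pow (hp : IsAdditivePoly p) (x y : S) (i : ℕ) :
    algebraMap R S (p.coeff i) * (x + y) ^ i =
      algebraMap R S (p.coeff i) * x ^ i + algebraMap R S (p.coeff i) * y ^ i := by
  have coeff_aeval (z : S) : (aeval (C z * X) p).coeff i = algebraMap R S (p.coeff i) * z ^ i := by
    rw [← aeval_map_algebraMap S, ← comp_eq_aeval, comp_C_mul_X_coeff, coeff_map]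
  rw [← coeff_aeval, ← coeff_aeval, ← coeff_aeval, ← coeff_add, ← hp.aeval_add, C_add, add_mul]

theorem map_algebraMap (hp : IsAdditivePoly p) : IsAdditivePoly (p.map (algebraMap R S)) := by
  rw [isAdditivePoly_iff_aeval]
  simpa only [aeval_map_algebraMap] using hp.aeval_add (C X : S[X][X]) X

theorem scaleRoots (hp : IsAdditivePoly p) (s : R) : IsAdditivePoly (p.scaleRoots s) := by
  rw [isAdditivePoly_iff_aeval]
  simp only [aeval_eq_sum_range, natDegree_scaleRoots, ← Finset.sum_add_distrib]
  refine Finset.sum_congr rfl fun i _ => ?_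
  simp only [coeff_scaleRoots, Algebra.smul_def, map_mul, mul_right_comm _ (algebraMap _ _ _),
    hp.coeff_mul_add_pow, add_mul]

end IsAdditivePoly

end AdditivePolynomial

namespace IsPair

variable {k A : Type*} [CommSemiring k] [CommSemiring A] [Algebra k A] {β : A →ₐ[k] A[X]}
  {b b₁ b₂ c : k[X]} {g g₁ g₂ h h₁ h₂ u : A}

theorem comp (hp : IsPair β c g h) (hb : IsAdditivePoly b) :
    IsPair β (b.comp c) (((b.map (algebraMap k A)).scaleRoots h).eval g)
      (h ^ (b.map (algebraMap k A)).natDegree) := by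
  obtain ⟨hh, hg⟩ := hp
  refine ⟨by rw [map_pow, hh, C_pow], ?_⟩
  set B := b.map (algebraMap k A) with hB
  have coeffs_invariant : (B.scaleRoots h).map (β : A →+* A[X]) = (B.scaleRoots h).map C := by
    ext1 i
    simp [hB, hh]
  have β_eval : β ((B.scaleRoots h).eval g) = aeval (β g) (B.scaleRoots h) := by
    rw [aeval_def, algebraMap_eq, ← eval_map, ← coeffs_invariant, eval_map]
    exact (eval₂_hom (β : A →+* A[X]) g).symm
  calc β ((B.scaleRoots h).eval g)
      = aeval (C g + C h * c.map (algebraMap k A)) (B.scaleRoots h) := by rw [β_eval, hg, mul_comm]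
    _ = aeval (C g) (B.scaleRoots h) + aeval (C h * c.map (algebraMap k A)) (B.scaleRoots h) :=
        (hb.map_algebraMap.scaleRoots h).aeval_add _ _
    _ = C ((B.scaleRoots h).eval g) + C h ^ B.natDegree * B.comp (c.map (algebraMap k A)) := by
        rw [aeval_def, aeval_def, algebraMap_eq, eval₂_hom, scaleRoots_eval₂_mul, Polynomial.comp]
    _ = C ((B.scaleRoots h).eval g) + (b.comp c).map (algebraMap k A) * C (h ^ B.natDegree) := by
        rw [map_comp, C_pow, mul_comm]

theorem mul_right (hp : IsPair β b g h) (hu : β u = C u) : IsPair β b (g * u) (h * u) := by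
  refine ⟨by rw [map_mul, hp.1, hu, C_mul], ?_⟩
  simp only [map_mul, hp.2, hu]
  ring

theorem add (hp₁ : IsPair β b₁ g₁ h₁) (hp₂ : IsPair β b₂ g₂ h₂) :
    IsPair β (b₁ + b₂) (g₁ * h₂ + g₂ * h₁) (h₁ * h₂) := by
  refine ⟨by rw [map_mul, hp₁.1, hp₂.1, C_mul], ?_⟩
  simp only [map_add, map_mul, hp₁.1, hp₁.2, hp₂.1, hp₂.2, Polynomial.map_add]
  ring

end IsPair

theorem stmt3_general {k A : Type*} [CommSemiring k] [CommSemiring A] [Algebra k A]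
    (β : A →ₐ[k] A[X]) (c₁ c₂ : k[X]) (g₁ h₁ g₂ h₂ : A)
    (hp₁ : IsPair β c₁ g₁ h₁) (hp₂ : IsPair β c₂ g₂ h₂)
    (b₁ b₂ : k[X]) (hb₁ : IsAdditivePoly b₁) (hb₂ : IsAdditivePoly b₂) :
    ∃ (g : A) (e : ℕ), IsPair β (b₁.comp c₁ + b₂.comp c₂) g ((h₁ * h₂) ^ e) := by
  set n₁ := (b₁.map (algebraMap k A)).natDegree
  set n₂ := (b₂.map (algebraMap k A)).natDegree
  have cofactor_invariant : β (h₁ ^ n₂ * h₂ ^ n₁) = C (h₁ ^ n₂ * h₂ ^ n₁) := by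
    simp only [map_mul, map_pow, hp₁.1, hp₂.1]
  have pow_eq : h₁ ^ n₁ * h₂ ^ n₂ * (h₁ ^ n₂ * h₂ ^ n₁) = (h₁ * h₂) ^ (n₁ + n₂) := by ring
  exact ⟨_, n₁ + n₂, pow_eq ▸ ((hp₁.comp hb₁).add (hp₂.comp hb₂)).mul_right cofactor_invariant⟩

/-- combination of pairs: if `(g₁,h₁)` is a `c₁(t)`-pair and
`(g₂,h₂)` is a `c₂(t)`-pair with `h₁, h₂ ≠ 0`, and `b₁, b₂` are additive, then
setting `b(t) = b₁(c₁(t)) + b₂(c₂(t))` there exist `g` and `e` such that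
`(g, (h₁h₂)^e)` is a `b(t)`-pair. -/
theorem stmt3 {k : Type*} [Field k] [IsAlgClosed k]
    {A : Type*} [CommRing A] [IsDomain A] [Algebra k A]
    (hfg : Algebra.FiniteType k A)
    (β : A →ₐ[k] Polynomial A) (hβ : IsGaCoaction β)
    (c₁ c₂ : Polynomial k) (hc₁ : IsAdditivePoly c₁) (hc₂ : IsAdditivePoly c₂)
    (g₁ h₁ g₂ h₂ : A) (hh₁ : h₁ ≠ 0) (hh₂ : h₂ ≠ 0)
    (hp₁ : IsPair β c₁ g₁ h₁) (hp₂ : IsPair β c₂ g₂ h₂)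
    (b₁ b₂ : Polynomial k) (hb₁ : IsAdditivePoly b₁) (hb₂ : IsAdditivePoly b₂) :
    ∃ (g : A) (e : ℕ), IsPair β (b₁.comp c₁ + b₂.comp c₂) g ((h₁ * h₂) ^ e) := by
  exact stmt3_general β c₁ c₂ g₁ h₁ g₂ h₂ hp₁ hp₂ b₁ b₂ hb₁ hb₂
end

section
/- Let k be an algebraically closed field of characteristic p > 0 and let c₁(t), c₂(t) ∈ k[t] be additive polynomials that are linearly independent over k. Let β be the 𝔾ₐ-coaction on A = k[x₁,x₂,x₃] determined by β(x₁) = x₁, β(x₂) = x₂, β(x₃) = x₃ + c₁(t)·x₁ + c₂(t)·x₂. Then A admits no nontrivial pair: whenever g ∈ A, h ∈ A^{𝔾ₐ}, and b(t) ∈ k[t] is a nonzero additive polynomial with β(g) = g + b(t)·h, one has h = 0. (In particular the large pedestal ideal of A is zero.) -/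
open Polynomial

/-!
With `u`, `v` new variables and `r = -c₂(t) / c₁(t)`, the action at time `t` fixes the point
`(u r, u, v)`, because `c₁(t) u r + c₂(t) u = 0`. Linear independence makes `r` non-constant, hence
transcendental, so the point is generic: no nonzero polynomial over the base ring vanishes there.
Evaluating `β(g) = g + b(t) h` at it gives `b(t) h(u r, u, v) = 0`, and `b ≠ 0` forces `h = 0`.
-/

section FixedPoint

variable {k A B : Type*} [CommRing k] [CommRing A] [Algebra k A] [CommRing B] [Algebra k B]

theorem aevalTower_map_algebraMap (φ : A →ₐ[k] B) (τ : B) (c : k[X]) :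
    aevalTower φ τ (c.map (algebraMap k A)) = aeval τ c := by
  simp [aevalTower, eval₂_map, aeval_def]

theorem eq_zero_of_aevalTower_comp_eq [NoZeroDivisors B] {β : A →ₐ[k] A[X]} {φ : A →ₐ[k] B} {τ : B}
    (hφ : Function.Injective φ) (hτ : Transcendental k τ) (hfix : (aevalTower φ τ).comp β = φ)
    {g h : A} {b : k[X]} (hb : b ≠ 0) (hg : β g = C g + b.map (algebraMap k A) * C h) :
    h = 0 := by
  have hφg : φ g = φ g + aeval τ b * φ h :=
    calc φ g = aevalTower φ τ (β g) := (DFunLike.congr_fun hfix g).symm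
      _ = φ g + aeval τ b * φ h := by
        rw [hg, map_add, map_mul, aevalTower_map_algebraMap, aevalTower_C, aevalTower_C]
  have hbτ : aeval τ b ≠ 0 := fun h0 => hb (transcendental_iff.1 hτ b h0)
  have hφh : φ h = 0 := (mul_eq_zero.1 (left_eq_add.1 hφg)).resolve_left hbτ
  exact (map_eq_zero_iff φ hφ).1 hφh

end FixedPoint

section LinearIndependent

theorem transcendental_div_of_linearIndependent_pair {K : Type*} [Field K] {c₁ c₂ : K[X]}
    (hc : LinearIndependent K ![c₁, c₂]) :
    Transcendental K (algebraMap K[X] (RatFunc K) c₂ / algebraMap K[X] (RatFunc K) c₁) := by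
  refine RatFunc.transcendental_of_ne_C _ ?_
  rintro ⟨a, ha⟩
  have hc₁ : algebraMap K[X] (RatFunc K) c₁ ≠ 0 := RatFunc.algebraMap_ne_zero (hc.ne_zero 0)
  have hc₂ : c₂ = a • c₁ := by
    apply RatFunc.algebraMap_injective K
    rw [smul_eq_C_mul, map_mul, RatFunc.algebraMap_C, ← ha, div_mul_cancel₀ _ hc₁]
  have hcoeff := LinearIndependent.pair_iff.1 hc a (-1) (by rw [hc₂, neg_one_smul, add_neg_cancel])
  exact neg_ne_zero.2 one_ne_zero hcoeff.2

theorem linearIndependent_map_algebraMap {R ι : Type*} (K : Type*) [CommRing R] [CommRing K]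
    [Algebra R K] [IsFractionRing R K] {c : ι → R[X]} (hc : LinearIndependent R c) :
    LinearIndependent K (map (algebraMap R K) ∘ c) := by
  refine (LinearIndependent.iff_fractionRing R K).1 (hc.map' (mapAlg R K).toLinearMap ?_)
  exact LinearMap.ker_eq_bot.2 (map_injective _ (IsFractionRing.injective R K))

theorem exists_transcendental_aeval_mul_add_aeval_eq_zero {R : Type*} (K : Type*) [CommRing R]
    [Field K] [Algebra R K] [IsFractionRing R K] {c₁ c₂ : R[X]}
    (hc : LinearIndependent R ![c₁, c₂]) :
    ∃ τ r : RatFunc K, Transcendental R τ ∧ Transcendental R r ∧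
      aeval τ c₁ * r + aeval τ c₂ = 0 := by
  have hinj : Function.Injective (algebraMap R K) := IsFractionRing.injective R K
  have hcK : LinearIndependent K ![c₁.map (algebraMap R K), -c₂.map (algebraMap R K)] := by
    have hvec : map (algebraMap R K) ∘ ![c₁, c₂] =
        ![c₁.map (algebraMap R K), c₂.map (algebraMap R K)] := by
      ext1 i
      fin_cases i <;> rfl
    rw [LinearIndependent.pair_neg_right_iff, ← hvec]
    exact linearIndependent_map_algebraMap K hc
  have haeval (c : R[X]) : aeval (RatFunc.X : RatFunc K) c =
      algebraMap K[X] (RatFunc K) (c.map (algebraMap R K)) := by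
    rw [← RatFunc.aeval_X_left_eq_algebraMap, aeval_map_algebraMap]
  have hc₁ : algebraMap K[X] (RatFunc K) (c₁.map (algebraMap R K)) ≠ 0 :=
    RatFunc.algebraMap_ne_zero (hcK.ne_zero 0)
  refine ⟨RatFunc.X, _, RatFunc.transcendental_X.restrictScalars hinj,
    (transcendental_div_of_linearIndependent_pair hcK).restrictScalars hinj, ?_⟩
  rw [haeval, haeval, mul_div_cancel₀ _ hc₁, map_neg, neg_add_cancel]

end LinearIndependent

section AlgebraicIndependent

theorem algebraicIndependent_option_mul_of_mem_adjoin {R A ι : Type*} [CommRing R] [CommRing A]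
    [IsDomain A] [Algebra R A] {x : ι → A} {a s : A}
    (h : AlgebraicIndependent R fun o : Option ι => o.elim a x)
    (hs : s ∈ Algebra.adjoin R (Set.range x)) (hs0 : s ≠ 0) :
    AlgebraicIndependent R fun o : Option ι => o.elim (s * a) x := by
  obtain ⟨hx, ha⟩ := AlgebraicIndependent.option_iff.1 h
  have hs_alg : IsAlgebraic (Algebra.adjoin R (Set.range x)) s :=
    isAlgebraic_algebraMap (⟨s, hs⟩ : Algebra.adjoin R (Set.range x))
  exact AlgebraicIndependent.option_iff.2
    ⟨hx, fun hsa => ha (hs_alg.of_mul (mem_nonZeroDivisors_of_ne_zero hs0) hsa)⟩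

variable {R S : Type*} [CommRing R] [CommRing S] [Algebra R S] {r : S}

theorem algebraicIndependent_option_C_X (ι : Type*) (hr : Transcendental R r) :
    AlgebraicIndependent R fun o : Option ι =>
      o.elim (MvPolynomial.C r : MvPolynomial ι S) MvPolynomial.X := by
  have hr_unit : AlgebraicIndependent R fun _ : Unit => r :=
    (algebraicIndependent_unique_type_iff (ι := Unit)).2 hr
  convert (hr_unit.sumElim_comp (MvPolynomial.algebraicIndependent_X ι S)).comp _
    (Equiv.optionEquivSumPUnit ι).injective using 1
  ext1 (_ | i) <;> rfl

theorem algebraicIndependent_option_X_mul_C_X [IsDomain S] {ι : Type*} (i : ι)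
    (hr : Transcendental R r) :
    AlgebraicIndependent R fun o : Option ι =>
      o.elim (MvPolynomial.X i * MvPolynomial.C r : MvPolynomial ι S) MvPolynomial.X :=
  algebraicIndependent_option_mul_of_mem_adjoin (algebraicIndependent_option_C_X ι hr)
    (Algebra.subset_adjoin (Set.mem_range_self i)) (MvPolynomial.X_ne_zero i)

end AlgebraicIndependent

theorem aevalTower_comp_eq_of_aeval_mul_add_eq_zero {k B : Type*} [CommRing k] [CommRing B]
    [Algebra k B] {c₁ c₂ : k[X]}
    {β : MvPolynomial (Fin 3) k →ₐ[k] (MvPolynomial (Fin 3) k)[X]}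
    (h1 : β (MvPolynomial.X 0) = C (MvPolynomial.X 0))
    (h2 : β (MvPolynomial.X 1) = C (MvPolynomial.X 1))
    (h3 : β (MvPolynomial.X 2) = C (MvPolynomial.X 2) +
      c₁.map (algebraMap k (MvPolynomial (Fin 3) k)) * C (MvPolynomial.X 0) +
      c₂.map (algebraMap k (MvPolynomial (Fin 3) k)) * C (MvPolynomial.X 1))
    {φ : MvPolynomial (Fin 3) k →ₐ[k] B} {τ : B}
    (hτ : aeval τ c₁ * φ (MvPolynomial.X 0) + aeval τ c₂ * φ (MvPolynomial.X 1) = 0) :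
    (aevalTower φ τ).comp β = φ := by
  refine MvPolynomial.algHom_ext fun j => ?_
  rw [AlgHom.comp_apply]
  fin_cases j
  · exact (congrArg (aevalTower φ τ) h1).trans (aevalTower_C φ τ _)
  · exact (congrArg (aevalTower φ τ) h2).trans (aevalTower_C φ τ _)
  · calc aevalTower φ τ (β (MvPolynomial.X 2))
        = φ (MvPolynomial.X 2) +
            (aeval τ c₁ * φ (MvPolynomial.X 0) + aeval τ c₂ * φ (MvPolynomial.X 1)) := by
          simp only [h3, map_add, map_mul, aevalTower_C, aevalTower_map_algebraMap, add_assoc]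
      _ = φ (MvPolynomial.X 2) := by rw [hτ, add_zero]

theorem stmt8_general {k : Type*} [CommRing k] [IsDomain k]
    {c₁ c₂ : k[X]} (hli : LinearIndependent k ![c₁, c₂])
    {β : MvPolynomial (Fin 3) k →ₐ[k] (MvPolynomial (Fin 3) k)[X]}
    (h1 : β (MvPolynomial.X 0) = C (MvPolynomial.X 0))
    (h2 : β (MvPolynomial.X 1) = C (MvPolynomial.X 1))
    (h3 : β (MvPolynomial.X 2) = C (MvPolynomial.X 2) +
      c₁.map (algebraMap k (MvPolynomial (Fin 3) k)) * C (MvPolynomial.X 0) +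
      c₂.map (algebraMap k (MvPolynomial (Fin 3) k)) * C (MvPolynomial.X 1))
    {g h : MvPolynomial (Fin 3) k} {b : k[X]} (hb : b ≠ 0)
    (hg : β g = C g + b.map (algebraMap k (MvPolynomial (Fin 3) k)) * C h) :
    h = 0 := by
  obtain ⟨τ, r, hτ, hr, hτr⟩ :=
    exists_transcendental_aeval_mul_add_aeval_eq_zero (FractionRing k) hli
  let B := MvPolynomial (Fin 2) (RatFunc (FractionRing k))
  let φ : MvPolynomial (Fin 3) k →ₐ[k] B := MvPolynomial.aeval fun j =>
    (finSuccEquiv 2 j).elim (MvPolynomial.X 0 * MvPolynomial.C r) MvPolynomial.X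
  have hφ : Function.Injective φ :=
    (algebraicIndependent_option_X_mul_C_X 0 hr).comp _ (finSuccEquiv 2).injective
  have hφ0 : φ (MvPolynomial.X 0) = MvPolynomial.X 0 * algebraMap _ B r :=
    MvPolynomial.aeval_X _ _
  have hφ1 : φ (MvPolynomial.X 1) = MvPolynomial.X 0 := MvPolynomial.aeval_X _ _
  have hτB : Transcendental k (algebraMap _ B τ) :=
    (transcendental_algebraMap_iff (MvPolynomial.C_injective _ _)).2 hτ
  have hφτ : aeval (algebraMap _ B τ) c₁ * φ (MvPolynomial.X 0) +
      aeval (algebraMap _ B τ) c₂ * φ (MvPolynomial.X 1) = 0 := by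
    have hτrB := congrArg (algebraMap _ B) hτr
    rw [map_add, map_mul, map_zero] at hτrB
    rw [hφ0, hφ1, aeval_algebraMap_apply, aeval_algebraMap_apply]
    linear_combination (MvPolynomial.X 0 : B) * hτrB
  have hfix := aevalTower_comp_eq_of_aeval_mul_add_eq_zero h1 h2 h3 hφτ
  exact eq_zero_of_aevalTower_comp_eq hφ hτB hfix hb hg

/-- Example: for the coaction on `k[x₁,x₂,x₃]` with
`β(x₃) = x₃ + c₁(t)x₁ + c₂(t)x₂`, where `c₁, c₂` are `k`-linearly independent
additive polynomials, there is no nontrivial pair: any `b(t)`-pair `(g,h)` with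
`b(t)` a nonzero additive polynomial has `h = 0`.  (So the large pedestal ideal
is zero.) -/
theorem stmt8 {k : Type*} [Field k] [IsAlgClosed k]
    (p : ℕ) (hp : p.Prime) (hchar : CharP k p)
    (c₁ c₂ : Polynomial k) (hc₁ : IsAdditivePoly c₁) (hc₂ : IsAdditivePoly c₂)
    (hli : LinearIndependent k ![c₁, c₂])
    (β : MvPolynomial (Fin 3) k →ₐ[k] Polynomial (MvPolynomial (Fin 3) k))
    (hβ : IsGaCoaction β)
    (h1 : β (MvPolynomial.X 0) = Polynomial.C (MvPolynomial.X 0))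
    (h2 : β (MvPolynomial.X 1) = Polynomial.C (MvPolynomial.X 1))
    (h3 : β (MvPolynomial.X 2) = Polynomial.C (MvPolynomial.X 2) +
      c₁.map (algebraMap k (MvPolynomial (Fin 3) k)) * Polynomial.C (MvPolynomial.X 0) +
      c₂.map (algebraMap k (MvPolynomial (Fin 3) k)) * Polynomial.C (MvPolynomial.X 1)) :
    ∀ (g h : MvPolynomial (Fin 3) k) (b : Polynomial k),
      IsAdditivePoly b → b ≠ 0 →
      β h = Polynomial.C h →
      β g = Polynomial.C g +
        b.map (algebraMap k (MvPolynomial (Fin 3) k)) * Polynomial.C h →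
      h = 0 := by
  intro g h b _ hb _ hg
  exact stmt8_general hli h1 h2 h3 hb hg
end

section
/- Let k be an algebraically closed field and let β be a linear, upper-triangular 𝔾ₐ-coaction on A = k[x₁,…,xₙ] (so β(x_i) = x_i + Σ_{j<i} q_{i,j}(t)·x_j). Suppose the large pedestal ideal of A is zero, i.e. whenever g ∈ A, h ∈ A^{𝔾ₐ}, and c(t) is a nonzero additive polynomial with β(g) = g + c(t)·h, then h = 0. Then A^{𝔾ₐ} equals the k-subalgebra of A generated by the invariant linear forms, i.e. by {ℓ ∈ span_k(x₁,…,xₙ) : β(ℓ) = ℓ}. -/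
open Polynomial

/-!
Let `f` be a non-invariant with `deg β(f)` minimal. The coefficients of `β(f) - f` are invariant,
and the pedestal ideal being zero means that `β(f) - f` is not of the form `c(t)·h` with `c ∈ k[t]`.
Since `k` is integrally closed in `Frac A`, this forces `β(f) - f` to have a root `τ` transcendental
over `k` in the algebraic closure of `Frac A`. Minimality of `f` makes `deg β(f)` divide every
`deg β(g)`, and cancelling leading terms shows that specialising `t = τ` fixes every `g ∈ A`.

For linear forms `f` and `g`, write `β(f) - f = Σ_j r_j(t)·x_j` and `β(g) - g = Σ_j s_j(t)·x_j`.
Both sums vanish at `t = τ`; as the `x_j` are algebraically independent and `τ` is transcendental,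
an exchange argument makes the minors `r_a·s_b - r_b·s_a` zero. All `r_j` and `s_j` turn out to be
additive. An identity `a·d = b·c` between additive polynomials makes `a` or `d` a multiple of `b`,
and since `β(f) - f` is not `c(t)·h`, this makes `s` a scalar multiple of `r`. So the invariant
linear forms have codimension at most one among the linear forms, `A` is generated over them by one
further element `u`, and comparing degrees in `t` leaves no other invariants.
-/

/-! ### Additive polynomials and coefficients in a base field -/

theorem coeff_coeff_coaddSubst {R : Type*} [CommSemiring R] (p : R[X]) (m n : ℕ) :
    ((coaddSubst p).coeff m).coeff n = (m + n).choose m * p.coeff (m + n) := by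
  induction p using Polynomial.induction_on' with
  | add p q hp hq => simp only [coaddSubst, eval₂_add, coeff_add, mul_add] at hp hq ⊢; rw [hp, hq]
  | monomial d a =>
    have hX : (coaddSubst (monomial d a)).coeff m = C a * (X ^ (d - m) * (d.choose m : R[X])) := by
      rw [coaddSubst, eval₂_monomial, add_comm (C X) X, RingHom.comp_apply, coeff_C_mul,
        coeff_X_add_C_pow]
    rw [hX, coeff_C_mul, ← C_eq_natCast, coeff_mul_C, coeff_X_pow, coeff_monomial]
    rcases lt_trichotomy d (m + n) with h | rfl | h
    · rcases lt_or_ge d m with hm | hm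
      · simp [Nat.choose_eq_zero_of_lt hm, h.ne]
      · simp [show n ≠ d - m by omega, h.ne]
    · simp [mul_comm]
    · simp [show n ≠ d - m by omega, h.ne']

theorem isAdditivePoly_of_coeff {R : Type*} [CommSemiring R] {c : R[X]} (h0 : c.coeff 0 = 0)
    (h : ∀ m n, 0 < m → 0 < n → ((m + n).choose m : R) * c.coeff (m + n) = 0) :
    IsAdditivePoly c := by
  ext m n
  rw [coeff_coeff_coaddSubst, coeff_add, coeff_add, coeff_map, coeff_C, coeff_C]
  rcases m.eq_zero_or_pos with rfl | hm <;> rcases n.eq_zero_or_pos with rfl | hn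
  · simp [h0]
  · simp [hn.ne']
  · simp [hm.ne']
  · simp [h m n hm hn, hm.ne', hn.ne']

theorem exists_eq_C_mul_of_C_mul_map_C_eq {k : Type*} [Field k] {p q : k[X]} (hq : q ≠ 0)
    (h : C q * p.map C = C p * q.map C) : ∃ μ : k, p = C μ * q := by
  have hcoeff := congrArg (coeff · q.natDegree) h
  simp only [coeff_C_mul, coeff_map, coeff_natDegree] at hcoeff
  refine ⟨p.coeff q.natDegree / q.leadingCoeff, ?_⟩
  have hlead : C q.leadingCoeff ≠ 0 := C_ne_zero.2 (leadingCoeff_ne_zero.2 hq)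
  refine mul_left_cancel₀ hlead ?_
  rw [← mul_assoc, ← C_mul, mul_div_cancel₀ _ (leadingCoeff_ne_zero.2 hq), mul_comm, ← hcoeff,
    mul_comm]

theorem IsAdditivePoly.exists_eq_C_mul_or_of_mul_eq_mul {k : Type*} [Field k] {a b c d : k[X]}
    (ha : IsAdditivePoly a) (hb : IsAdditivePoly b) (hc : IsAdditivePoly c)
    (hd : IsAdditivePoly d) (hb0 : b ≠ 0) (h : a * d = b * c) :
    (∃ μ : k, a = C μ * b) ∨ ∃ μ : k, d = C μ * b := by
  have hsubst : coaddSubst a * coaddSubst d = coaddSubst b * coaddSubst c := by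
    simp only [coaddSubst, ← eval₂_mul, h]
  have hC : C a * C d = (C b * C c : k[X][X]) := by rw [← C_mul, h, C_mul]
  have hmap : a.map C * d.map C = b.map (C : k →+* k[X]) * c.map C := by
    rw [← Polynomial.map_mul, h, Polynomial.map_mul]
  rw [ha, hb, hc, hd] at hsubst
  have hprod : (C b * a.map C - C a * b.map C) * (C b * d.map C - C d * b.map C) = 0 := by
    linear_combination C b ^ 2 * hmap + b.map C ^ 2 * hC - C b * b.map C * (hsubst - hC - hmap)
  exact (mul_eq_zero.1 hprod).imp
    (fun h ↦ exists_eq_C_mul_of_C_mul_map_C_eq hb0 (sub_eq_zero.1 h))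
    (fun h ↦ exists_eq_C_mul_of_C_mul_map_C_eq hb0 (sub_eq_zero.1 h))

theorem isIntegrallyClosedIn_mvPolynomial (k σ : Type*) [Field k] :
    IsIntegrallyClosedIn k (MvPolynomial σ k) := by
  refine isIntegrallyClosedIn_iff.2 ⟨MvPolynomial.C_injective σ k, fun {a} ha ↦ ?_⟩
  rcases eq_or_ne a 0 with rfl | h0
  · exact ⟨0, map_zero _⟩
  · obtain ⟨c, -, hc⟩ := MvPolynomial.isUnit_iff_eq_C_of_isReduced.1 (ha.isUnit h0)
    exact ⟨c, hc.symm⟩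

theorem choose_mul_add_cast_eq_one {R : Type*} [CommRing R] {d r : ℕ} (hr : r < d)
    (h : ∀ m, 0 < m → m < d → (d.choose m : R) = 0) (q : ℕ) :
    ((d * q + r).choose r : R) = 1 := by
  have hd : (X : R[X]) ^ d ∣ (X + 1) ^ d - 1 := by
    refine X_pow_dvd_iff.2 fun m hm ↦ ?_
    rw [coeff_sub, coeff_X_add_one_pow, coeff_one]
    rcases m.eq_zero_or_pos with rfl | h0
    · simp
    · simp [h m h0 hm, h0.ne']
  have hdvd : (X : R[X]) ^ d ∣ (X + 1) ^ (d * q + r) - (X + 1) ^ r := by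
    have hfactor : ((X + 1) ^ (d * q + r) - (X + 1) ^ r : R[X]) =
        (((X + 1) ^ d) ^ q - 1 ^ q) * (X + 1) ^ r := by ring
    rw [hfactor]
    exact (hd.trans (sub_dvd_pow_sub_pow _ _ _)).mul_right _
  have hcoeff := X_pow_dvd_iff.1 hdvd r hr
  rwa [coeff_sub, coeff_X_add_one_pow, coeff_X_add_one_pow, Nat.choose_self, Nat.cast_one,
    sub_eq_zero] at hcoeff

section TensorSum

variable {k B ι : Type*} [Fintype ι]

/-- The polynomial `Σ_j r_j(t)·w_j` attached to elements `w_j` of a `k`-algebra `B` and polynomials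
`r_j ∈ k[t]`, that is, the image of `Σ_j r_j ⊗ w_j` in `B[t]`. -/
noncomputable def tensorSum [CommRing k] [CommRing B] [Algebra k B] (w : ι → B) (r : ι → k[X]) :
    B[X] :=
  ∑ j, (r j).map (algebraMap k B) * C (w j)

section CommRing

variable [CommRing k] [CommRing B] [Algebra k B]

theorem coeff_tensorSum (w : ι → B) (r : ι → k[X]) (m : ℕ) :
    (tensorSum w r).coeff m = ∑ j, (r j).coeff m • w j := by
  simp only [tensorSum, finsetSum_coeff, coeff_mul_C, coeff_map, Algebra.smul_def]

theorem mul_tensorSum (p : k[X]) (w : ι → B) (r : ι → k[X]) :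
    p.map (algebraMap k B) * tensorSum w r = tensorSum w (fun j ↦ p * r j) := by
  simp only [tensorSum, Finset.mul_sum, Polynomial.map_mul, mul_assoc]

theorem exists_eq_tensorSum {w : ι → B} {P : B[X]}
    (hP : ∀ m, P.coeff m ∈ Submodule.span k (Set.range w)) : ∃ r : ι → k[X], P = tensorSum w r := by
  choose a ha using fun m ↦ (Submodule.mem_span_range_iff_exists_fun k).1 (hP m)
  refine ⟨fun j ↦ ∑ m ∈ P.support, monomial m (a m j), ?_⟩
  ext m
  rw [coeff_tensorSum]
  by_cases hm : m ∈ P.support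
  · simp only [finsetSum_coeff, coeff_monomial, Finset.sum_ite_eq', if_pos hm, ha]
  · simp only [finsetSum_coeff, coeff_monomial, Finset.sum_ite_eq', if_neg hm, zero_smul,
      Finset.sum_const_zero, notMem_support_iff.1 hm]

theorem aeval_tensorSum {E : Type*} [CommRing E] [Algebra B E] [Algebra k E] [IsScalarTower k B E]
    (τ : E) (w : ι → B) (r : ι → k[X]) :
    aeval τ (tensorSum w r) = ∑ j, aeval τ (r j) * algebraMap B E (w j) := by
  simp only [tensorSum, map_sum, map_mul, aeval_map_algebraMap, aeval_C]

end CommRing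

theorem tensorSum_eq_zero_of_mul_eq_mul [Field k] [CommRing B] [IsDomain B] [Algebra k B]
    {w : ι → B} {r s : ι → k[X]} {a : ι} (ha : r a ≠ 0) (h : ∀ b, r a * s b = s a * r b)
    (hr : tensorSum w r = 0) : tensorSum w s = 0 := by
  have hmul : (r a).map (algebraMap k B) * tensorSum w s = 0 := by
    rw [mul_tensorSum, funext h, ← mul_tensorSum, hr, mul_zero]
  exact (mul_eq_zero.1 hmul).resolve_left
    ((Polynomial.map_ne_zero_iff (algebraMap k B).injective).2 ha)

end TensorSum

section Roots

instance faithfulSMul_algebraicClosure_fractionRing (A : Type*) [CommRing A] [IsDomain A] :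
    FaithfulSMul A (AlgebraicClosure (FractionRing A)) :=
  .trans A (FractionRing A) _

variable {k A : Type*} [Field k] [CommRing A] [IsDomain A] [Algebra k A]
  [IsIntegrallyClosedIn k A] [IsIntegrallyClosed A]

theorem exists_eq_map_mul_C_leadingCoeff {P : A[X]}
    (hP : ∀ τ : AlgebraicClosure (FractionRing A), aeval τ P = 0 → IsAlgebraic k τ) :
    ∃ c : k[X], P = c.map (algebraMap k A) * C P.leadingCoeff := by
  rcases eq_or_ne P 0 with rfl | hP0
  · exact ⟨0, by simp⟩
  let K := FractionRing A
  let E := AlgebraicClosure K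
  have hAK : Function.Injective (algebraMap A K) := IsFractionRing.injective A K
  have hb : algebraMap A K P.leadingCoeff ≠ 0 :=
    (map_ne_zero_iff _ hAK).2 (leadingCoeff_ne_zero.2 hP0)
  set p : K[X] := C (algebraMap A K P.leadingCoeff)⁻¹ * P.map (algebraMap A K) with hp
  have hmonic : p.Monic := by
    rw [Monic, hp, leadingCoeff_mul, leadingCoeff_C, leadingCoeff_map_of_injective hAK,
      inv_mul_cancel₀ hb]
  have hPp : P.map (algebraMap A K) = C (algebraMap A K P.leadingCoeff) * p := by
    rw [hp, ← mul_assoc, ← C_mul, mul_inv_cancel₀ hb, C_1, one_mul]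
  have hroot : ∀ τ : E, (p.map (algebraMap K E)).IsRoot τ → IsIntegral k τ := fun τ hτ ↦ by
    refine (hP τ ?_).isIntegral
    rw [IsRoot, eval_map_algebraMap] at hτ
    rw [← aeval_map_algebraMap K, hPp, map_mul, hτ, mul_zero]
  have hcoeff : ∀ m, IsIntegral k (p.coeff m) := fun m ↦ by
    rw [← isIntegral_algebraMap_iff (algebraMap K E).injective, ← coeff_map]
    refine isIntegral_coeff_of_factors _ ?_ (IsAlgClosed.splits _) hroot m
    rw [(hmonic.map _).leadingCoeff]
    exact isIntegral_one
  have : IsIntegrallyClosedIn k K := .of_isIntegralClosure_of_isIntegrallyClosedIn k k A K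
  obtain ⟨c, hc⟩ := (lifts_iff_coeff_lifts (f := algebraMap k K) p).2 fun m ↦
    IsIntegrallyClosedIn.isIntegral_iff.1 (hcoeff m)
  refine ⟨c, map_injective _ hAK ?_⟩
  rw [Polynomial.map_mul, map_map, ← IsScalarTower.algebraMap_eq, map_C, hPp, ← hc, mul_comm]
  rfl

end Roots

/-! ### Relations over a transcendental element -/

section Relations

open AlgebraicIndependent

variable {k E ι : Type*} [Field k] [Field E] [Algebra k E]

theorem notMem_matroid_closure_image {x : ι → E} (hx : AlgebraicIndependent k x) {s : Set ι} {i : ι}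
    (hi : i ∉ s) : x i ∉ (matroid k E).closure (x '' s) := by
  rw [matroid_closure_eq]
  exact hx.transcendental_adjoin hi

variable [Fintype ι]

theorem mem_matroid_closure_of_sum_eq_zero {x : ι → E} {τ : E} (hτ : Transcendental k τ)
    {w : ι → k[X]} (hw : ∑ j, aeval τ (w j) * x j = 0) {c : ι} (hc : w c ≠ 0) {T : Set ι}
    (hT : ∀ j ≠ c, w j ≠ 0 → j ∈ T) :
    x c ∈ (matroid k E).closure (insert τ (x '' T)) := by
  classical
  set K := IntermediateField.adjoin k (insert τ (x '' T))
  have haeval : ∀ p : k[X], aeval τ p ∈ K := fun p ↦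
    IntermediateField.algebra_adjoin_le_adjoin _ _
      (Algebra.adjoin_mono (by simp) (aeval_mem_adjoin_singleton k τ (p := p)))
  have hterm : ∀ j ≠ c, aeval τ (w j) * x j ∈ K := fun j hj ↦ by
    rcases eq_or_ne (w j) 0 with h0 | h0
    · rw [h0, map_zero, zero_mul]
      exact zero_mem K
    · exact mul_mem (haeval _) (IntermediateField.subset_adjoin _ _
        (Set.mem_insert_of_mem _ ⟨j, hT j hj h0, rfl⟩))
  have hmul : aeval τ (w c) * x c ∈ K := by
    rw [← Finset.add_sum_erase _ _ (Finset.mem_univ c)] at hw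
    rw [eq_neg_of_add_eq_zero_left hw]
    exact neg_mem (sum_mem fun j hj ↦ hterm j (Finset.ne_of_mem_erase hj))
  have hmem : x c ∈ K := by
    have h0 : aeval τ (w c) ≠ 0 := fun h ↦ hc (transcendental_iff.1 hτ _ h)
    rw [← inv_mul_cancel_left₀ h0 (x c)]
    exact mul_mem (inv_mem (haeval _)) hmul
  rw [matroid_closure_eq]
  exact IntermediateField.isAlgebraic_adjoin_iff.1 (isAlgebraic_algebraMap (⟨x c, hmem⟩ : K))

/-- If a minor `u a * v b - u b * v a` were nonzero, then eliminating `x b` and `x a` from the two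
relations would make `x a` and `x b` algebraic over `k(τ, x j : j ≠ a, b)`; exchanging `τ` for `x a`
then contradicts the algebraic independence of `x`. -/
theorem mul_eq_mul_of_sum_eq_zero {x : ι → E} (hx : AlgebraicIndependent k x) {τ : E}
    (hτ : Transcendental k τ) {u v : ι → k[X]} (hu : ∑ j, aeval τ (u j) * x j = 0)
    (hv : ∑ j, aeval τ (v j) * x j = 0) (a b : ι) : u a * v b = u b * v a := by
  by_contra hne
  have hab : a ≠ b := by
    rintro rfl
    exact hne rfl
  have hcomb : ∀ r s : k[X], ∑ j, aeval τ (u j * r - v j * s) * x j = 0 := fun r s ↦ by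
    simp only [map_sub, map_mul, sub_mul, mul_right_comm _ (aeval τ _) (x _),
      Finset.sum_sub_distrib, ← Finset.sum_mul, hu, hv, zero_mul, sub_zero]
  let T : Set ι := {a, b}ᶜ
  have hxa : x a ∈ (matroid k E).closure (insert τ (x '' T)) := by
    refine mem_matroid_closure_of_sum_eq_zero hτ (hcomb (v b) (u b)) ?_ fun j hja hj ↦ ?_
    · exact fun h ↦ hne (by linear_combination h)
    · refine fun h ↦ (h.resolve_left hja ▸ hj) (by ring)
  have hxb : x b ∈ (matroid k E).closure (insert τ (x '' T)) := by
    refine mem_matroid_closure_of_sum_eq_zero hτ (hcomb (v a) (u a)) ?_ fun j hjb hj ↦ ?_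
    · exact fun h ↦ hne (by linear_combination -h)
    · refine fun h ↦ (h.resolve_right hjb ▸ hj) (by ring)
  have hxaT : x a ∉ (matroid k E).closure (x '' T) := notMem_matroid_closure_image hx (by simp [T])
  rw [← Matroid.closure_insert_congr ⟨hxa, hxaT⟩, ← Set.image_insert_eq] at hxb
  exact notMem_matroid_closure_image hx (by simp [T, hab.symm]) hxb

end Relations

/-! ### Coactions and local slices -/

section Coaction

variable {k A : Type*} [CommRing k] [CommRing A] [Algebra k A]

/-- The subalgebra `A^{𝔾ₐ}` of invariants of a coaction `β` on `A`. -/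
noncomputable def gaInvariants (β : A →ₐ[k] A[X]) : Subalgebra k A :=
  AlgHom.equalizer β CAlgHom

/-- The part `β(a) - a` of the coaction that measures the failure of `a` to be invariant, as a
linear map; under the coaction axioms it is the positive-degree part of `β(a)`. -/
noncomputable def displacement (β : A →ₐ[k] A[X]) : A →ₗ[k] A[X] :=
  β.toLinearMap - (CAlgHom : A →ₐ[k] A[X]).toLinearMap

/-- The large pedestal ideal of `A`, generated by the invariants `h` such that
`β(g) = g + c(t)·h` for some `g` and some nonzero additive `c`. -/
noncomputable def largePedestalIdeal (β : A →ₐ[k] A[X]) : Ideal A :=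
  Ideal.span {h | h ∈ gaInvariants β ∧ ∃ (g : A) (c : k[X]), IsAdditivePoly c ∧ c ≠ 0 ∧
    β g = C g + c.map (algebraMap k A) * C h}

/-- A local slice: a non-invariant `f` for which every coefficient of `β(f) - f` is invariant. -/
structure IsLocalSlice (β : A →ₐ[k] A[X]) (f : A) : Prop where
  notMem : f ∉ gaInvariants β
  coeff_mem : ∀ m, (displacement β f).coeff m ∈ gaInvariants β

variable {β : A →ₐ[k] A[X]}

theorem mem_gaInvariants {a : A} : a ∈ gaInvariants β ↔ β a = C a := Iff.rfl

theorem displacement_apply (a : A) : displacement β a = β a - C a := rfl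

theorem displacement_eq_zero {a : A} : displacement β a = 0 ↔ a ∈ gaInvariants β := sub_eq_zero

theorem coeff_displacement (a : A) {m : ℕ} (hm : m ≠ 0) :
    (displacement β a).coeff m = (β a).coeff m := by
  rw [displacement_apply, coeff_sub, coeff_C_of_ne_zero hm, sub_zero]

theorem largePedestalIdeal_eq_bot_iff :
    largePedestalIdeal β = ⊥ ↔ ∀ (g h : A) (c : k[X]), IsAdditivePoly c → c ≠ 0 → β h = C h →
      β g = C g + c.map (algebraMap k A) * C h → h = 0 :=
  Ideal.span_eq_bot.trans ⟨fun H g h c hc hc0 hh hg ↦ H h ⟨hh, g, c, hc, hc0, hg⟩,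
    fun H h ⟨hh, g, c, hc, hc0, hg⟩ ↦ H g h c hc hc0 hh hg⟩

theorem eq_zero_of_displacement_eq (hped : largePedestalIdeal β = ⊥) {g h : A} {c : k[X]}
    (hh : h ∈ gaInvariants β) (hc : IsAdditivePoly c) (hc0 : c ≠ 0)
    (hg : displacement β g = c.map (algebraMap k A) * C h) : h = 0 :=
  largePedestalIdeal_eq_bot_iff.1 hped g h c hc hc0 hh (by rw [← hg, displacement_apply]; ring)

namespace IsGaCoaction

theorem coeff_coeff (hβ : IsGaCoaction β) (a : A) (m n : ℕ) :
    (β ((β a).coeff m)).coeff n = (m + n).choose m * (β a).coeff (m + n) := by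
  rw [← coeff_coeff_coaddSubst, hβ.2 a, coeff_map]
  rfl

theorem coeff_zero (hβ : IsGaCoaction β) (a : A) : (β a).coeff 0 = a := by
  rw [coeff_zero_eq_eval_zero, hβ.1]

theorem coeff_displacement_zero (hβ : IsGaCoaction β) (a : A) : (displacement β a).coeff 0 = 0 := by
  rw [displacement_apply, coeff_sub, hβ.coeff_zero, coeff_C_zero, sub_self]

theorem natDegree_eq_zero (hβ : IsGaCoaction β) {a : A} :
    (β a).natDegree = 0 ↔ a ∈ gaInvariants β := by
  refine ⟨fun h ↦ ?_, fun h ↦ by rw [mem_gaInvariants.1 h, natDegree_C]⟩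
  rw [mem_gaInvariants, eq_C_of_natDegree_eq_zero h, hβ.coeff_zero]

theorem natDegree_pos (hβ : IsGaCoaction β) {a : A} : 0 < (β a).natDegree ↔ a ∉ gaInvariants β := by
  rw [Nat.pos_iff_ne_zero, Ne, hβ.natDegree_eq_zero]

theorem natDegree_coeff_le (hβ : IsGaCoaction β) (a : A) (m : ℕ) :
    (β ((β a).coeff m)).natDegree ≤ (β a).natDegree - m := by
  refine natDegree_le_iff_coeff_eq_zero.2 fun n hn ↦ ?_
  rw [hβ.coeff_coeff, coeff_eq_zero_of_natDegree_lt (by omega), mul_zero]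

theorem leadingCoeff_mem (hβ : IsGaCoaction β) (a : A) : (β a).leadingCoeff ∈ gaInvariants β := by
  have h := hβ.natDegree_coeff_le a (β a).natDegree
  rwa [Nat.sub_self, Nat.le_zero, hβ.natDegree_eq_zero] at h

theorem exists_isLocalSlice (hβ : IsGaCoaction β) (W : Submodule k A)
    (hW : ∀ g ∈ W, ∀ m, (β g).coeff m ∈ W) (hne : ∃ g ∈ W, g ∉ gaInvariants β) :
    ∃ f ∈ W, IsLocalSlice β f ∧
      ∀ g ∈ W, g ∉ gaInvariants β → (β f).natDegree ≤ (β g).natDegree := by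
  obtain ⟨f, ⟨hfW, hf⟩, hmin⟩ := exists_minimalFor_of_wellFoundedLT
    (fun g ↦ g ∈ W ∧ g ∉ gaInvariants β) (fun g ↦ (β g).natDegree) hne
  have hle : ∀ g ∈ W, g ∉ gaInvariants β → (β f).natDegree ≤ (β g).natDegree :=
    fun g hgW hg ↦ (le_total _ _).elim id (hmin ⟨hgW, hg⟩)
  refine ⟨f, hfW, ⟨hf, fun m ↦ ?_⟩, hle⟩
  rcases eq_or_ne m 0 with rfl | hm
  · rw [hβ.coeff_displacement_zero]
    exact zero_mem _
  · rw [coeff_displacement f hm]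
    by_contra hmem
    have hlower := hβ.natDegree_coeff_le f m
    have hpos := hβ.natDegree_pos.2 hf
    have := hle _ (hW f hfW m) hmem
    omega

end IsGaCoaction

end Coaction

namespace IsLocalSlice

section Domain

variable {k A : Type*} [CommRing k] [CommRing A] [IsDomain A] [Algebra k A]
  {β : A →ₐ[k] A[X]} {f : A}

theorem choose_natDegree_eq_zero (hf : IsLocalSlice β f) (hβ : IsGaCoaction β) {m : ℕ}
    (hm : 0 < m) (hmd : m < (β f).natDegree) : ((β f).natDegree.choose m : A) = 0 := by
  have hcoeff := hβ.coeff_coeff f m ((β f).natDegree - m)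
  have hinv := hf.coeff_mem m
  rw [coeff_displacement f hm.ne', mem_gaInvariants] at hinv
  rw [hinv, coeff_C_of_ne_zero (by omega), Nat.add_sub_cancel' hmd.le] at hcoeff
  refine (mul_eq_zero.1 hcoeff.symm).resolve_right fun hlead ↦ ?_
  rw [coeff_natDegree, leadingCoeff_eq_zero] at hlead
  simp [hlead] at hmd

/-- Writing `deg β(g) = d * q + r` with `d = deg β(f)` and `r < d`, the coefficient of
`t ^ (d * q)` in `β(g)` has degree exactly `r`, so minimality of `d` forces `r = 0`. -/
theorem natDegree_dvd_natDegree (hf : IsLocalSlice β f) (hβ : IsGaCoaction β)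
    (hmin : ∀ g, g ∉ gaInvariants β → (β f).natDegree ≤ (β g).natDegree) (g : A) :
    (β f).natDegree ∣ (β g).natDegree := by
  set d := (β f).natDegree
  set e := (β g).natDegree with he
  have hrd : e % d < d := Nat.mod_lt _ (hβ.natDegree_pos.2 hf.notMem)
  have hqr : d * (e / d) + e % d = e := Nat.div_add_mod e d
  refine Nat.dvd_of_mod_eq_zero (Nat.eq_zero_of_not_pos fun hr ↦ ?_)
  set a := (β g).coeff (d * (e / d)) with ha
  have hdeg : (β a).natDegree < d := by
    have hle := hβ.natDegree_coeff_le g (d * (e / d))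
    rw [← ha, ← he] at hle
    omega
  have hinv : a ∈ gaInvariants β := by
    by_contra h
    exact (hmin a h).not_gt hdeg
  have hchoose := choose_mul_add_cast_eq_one hrd
    (fun m h0 h ↦ hf.choose_natDegree_eq_zero hβ h0 h) (e / d)
  have hlead := hβ.coeff_coeff g (d * (e / d)) (e % d)
  rw [← ha, mem_gaInvariants.1 hinv, coeff_C_of_ne_zero hr.ne', Nat.choose_symm_add, hchoose, hqr,
    one_mul, he, coeff_natDegree, eq_comm, leadingCoeff_eq_zero] at hlead
  rw [he, hlead, natDegree_zero, Nat.zero_mod] at hr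
  exact hr.false

variable {E : Type*} [CommRing E] [IsDomain E] [Algebra A E] [FaithfulSMul A E]

theorem aeval_eq_algebraMap (hf : IsLocalSlice β f) (hβ : IsGaCoaction β)
    (hmin : ∀ g, g ∉ gaInvariants β → (β f).natDegree ≤ (β g).natDegree)
    {τ : E} (hτ : aeval τ (β f) = algebraMap A E f)
    (g : A) : aeval τ (β g) = algebraMap A E g := by
  induction hN : (β g).natDegree using Nat.strong_induction_on generalizing g with
  | _ e ih =>
    subst hN
    rcases Nat.eq_zero_or_pos (β g).natDegree with he | he
    · rw [mem_gaInvariants.1 (hβ.natDegree_eq_zero.1 he), aeval_C]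
    obtain ⟨r, hr⟩ := hf.natDegree_dvd_natDegree hβ hmin g
    set b := (β f).leadingCoeff with hb
    set c := (β g).leadingCoeff with hc
    have hdeg : (β f ^ r).natDegree = (β g).natDegree := by rw [natDegree_pow, hr, mul_comm]
    have hcancel : β (b ^ r * g - c * f ^ r) = cancelLeads (β f ^ r) (β g) := by
      rw [cancelLeads, hdeg, Nat.sub_self, pow_zero, mul_one, mul_one, leadingCoeff_pow, map_sub,
        map_mul, map_mul, map_pow, map_pow, mem_gaInvariants.1 (hβ.leadingCoeff_mem f),
        mem_gaInvariants.1 (hβ.leadingCoeff_mem g), C_pow]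
    have hlower : aeval τ (β (b ^ r * g - c * f ^ r)) = algebraMap A E (b ^ r * g - c * f ^ r) := by
      refine ih _ ?_ _ rfl
      rw [hcancel]
      exact natDegree_cancelLeads_lt_of_natDegree_le_natDegree hdeg.le he
    simp only [map_sub, map_mul, map_pow, hτ, mem_gaInvariants.1 (hβ.leadingCoeff_mem f),
      mem_gaInvariants.1 (hβ.leadingCoeff_mem g), aeval_C, hb, hc] at hlower
    have hb0 : algebraMap A E b ^ r ≠ 0 := by
      have hinj := FaithfulSMul.algebraMap_injective A E
      refine pow_ne_zero _ ((map_ne_zero_iff _ hinj).2 fun h ↦ ?_)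
      exact hf.notMem (hβ.natDegree_eq_zero.1 (by rw [leadingCoeff_eq_zero.1 h, natDegree_zero]))
    exact mul_left_cancel₀ hb0 (sub_left_injective hlower)

end Domain

end IsLocalSlice

namespace IsGaCoaction

section Additive

variable {k A ι : Type*} [CommRing k] [CommRing A] [Algebra k A] [Fintype ι] {β : A →ₐ[k] A[X]}

theorem isAdditivePoly_of_displacement_eq_tensorSum (hβ : IsGaCoaction β) {w : ι → A}
    (hw : LinearIndependent k w) {f : A} {r : ι → k[X]} (hf : displacement β f = tensorSum w r)
    (hinv : ∀ m, (displacement β f).coeff m ∈ gaInvariants β) (j : ι) : IsAdditivePoly (r j) := by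
  refine isAdditivePoly_of_coeff ?_ fun m n hm hn ↦ ?_
  · have h0 := hβ.coeff_displacement_zero f
    rw [hf, coeff_tensorSum] at h0
    exact Fintype.linearIndependent_iff.1 hw _ h0 j
  · have h0 := hβ.coeff_coeff f m n
    rw [← coeff_displacement f hm.ne', mem_gaInvariants.1 (hinv m), coeff_C_of_ne_zero hn.ne',
      ← coeff_displacement f (by omega), hf, coeff_tensorSum, Finset.mul_sum] at h0
    refine Fintype.linearIndependent_iff.1 hw (fun i ↦ (m + n).choose m * (r i).coeff (m + n)) ?_ j
    rw [h0]
    refine Finset.sum_congr rfl fun i _ ↦ ?_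
    rw [mul_smul, ← nsmul_eq_mul, Nat.cast_smul_eq_nsmul]

end Additive

end IsGaCoaction

section ZeroPedestal

variable {k A : Type*} [Field k] [CommRing A] [IsDomain A] [Algebra k A] {β : A →ₐ[k] A[X]}

theorem exists_transcendental_aeval_eq [IsIntegrallyClosedIn k A] [IsIntegrallyClosed A]
    (hβ : IsGaCoaction β) (hped : largePedestalIdeal β = ⊥) (hne : ∃ g, g ∉ gaInvariants β) :
    ∃ τ : AlgebraicClosure (FractionRing A), Transcendental k τ ∧
      ∀ g, aeval τ (β g) = algebraMap A _ g := by
  obtain ⟨g, hg⟩ := hne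
  obtain ⟨f, -, hf, hmin⟩ :=
    hβ.exists_isLocalSlice ⊤ (fun _ _ _ ↦ Submodule.mem_top) ⟨g, Submodule.mem_top, hg⟩
  have hdisp : displacement β f ≠ 0 := fun h ↦ hf.notMem (displacement_eq_zero.1 h)
  suffices h : ∃ τ : AlgebraicClosure (FractionRing A),
      aeval τ (displacement β f) = 0 ∧ Transcendental k τ by
    obtain ⟨τ, hτ, htrans⟩ := h
    rw [displacement_apply, map_sub, aeval_C, sub_eq_zero] at hτ
    exact ⟨τ, htrans, hf.aeval_eq_algebraMap hβ (fun g ↦ hmin g Submodule.mem_top) hτ⟩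
  by_contra! halg
  obtain ⟨c, hc⟩ := exists_eq_map_mul_C_leadingCoeff (k := k) (P := displacement β f)
    fun τ hτ ↦ not_not.1 (halg τ hτ)
  have hb : (displacement β f).leadingCoeff ≠ 0 := leadingCoeff_ne_zero.2 hdisp
  have hsum : displacement β f =
      tensorSum (fun _ : Unit ↦ (displacement β f).leadingCoeff) fun _ ↦ c := by
    rw [tensorSum, Fintype.sum_unique, ← hc]
  refine hb (eq_zero_of_displacement_eq hped (hf.coeff_mem _) ?_ ?_ hc)
  · exact hβ.isAdditivePoly_of_displacement_eq_tensorSum (.of_subsingleton () hb) hsum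
      hf.coeff_mem ()
  · rintro rfl
    rw [Polynomial.map_zero, zero_mul] at hc
    exact hdisp hc

end ZeroPedestal

/-! ### Linear forms -/

section LinearForms

variable {k A ι : Type*} [Field k] [CommRing A] [Algebra k A] {β : A →ₐ[k] A[X]} {x : ι → A}

theorem coeff_mem_span_range
    (hlin : ∀ i m, (β (x i)).coeff m ∈ Submodule.span k (Set.range x)) {g : A}
    (hg : g ∈ Submodule.span k (Set.range x)) (m : ℕ) :
    (β g).coeff m ∈ Submodule.span k (Set.range x) := by
  have hle : Submodule.span k (Set.range x) ≤ (Submodule.span k (Set.range x)).comap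
      ((lcoeff A m).restrictScalars k ∘ₗ β.toLinearMap) :=
    Submodule.span_le.2 (Set.range_subset_iff.2 fun i ↦ hlin i m)
  exact hle hg

theorem coeff_C_add_sum_mem_span_range (i : ι) (s : Finset ι) (q : ι → k[X]) (m : ℕ) :
    (C (x i) + ∑ j ∈ s, (q j).map (algebraMap k A) * C (x j)).coeff m ∈
      Submodule.span k (Set.range x) := by
  have hmem (j : ι) : x j ∈ Submodule.span k (Set.range x) := Submodule.subset_span ⟨j, rfl⟩
  simp only [coeff_add, coeff_C, finsetSum_coeff, coeff_mul_C, coeff_map, ← Algebra.smul_def]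
  refine add_mem ?_ (sum_mem fun j _ ↦ Submodule.smul_mem _ _ (hmem j))
  split_ifs
  exacts [hmem i, zero_mem _]

section Fintype

variable [Fintype ι]

theorem exists_displacement_eq_tensorSum
    (hlin : ∀ i m, (β (x i)).coeff m ∈ Submodule.span k (Set.range x)) {g : A}
    (hg : g ∈ Submodule.span k (Set.range x)) :
    ∃ r : ι → k[X], displacement β g = tensorSum x r := by
  refine exists_eq_tensorSum fun m ↦ ?_
  rw [displacement_apply, coeff_sub, coeff_C]
  refine sub_mem (coeff_mem_span_range hlin hg m) ?_
  split_ifs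
  exacts [hg, zero_mem _]

theorem forall_coeff_tensorSum_mem_iff {r : ι → k[X]} :
    (∀ m, (tensorSum x r).coeff m ∈ gaInvariants β) ↔
      tensorSum (fun j ↦ displacement β (x j)) r = 0 := by
  rw [Polynomial.ext_iff]
  refine forall_congr' fun m ↦ ?_
  rw [← displacement_eq_zero, coeff_tensorSum, coeff_tensorSum, map_sum, Polynomial.coeff_zero]
  simp only [map_smul]

theorem mul_eq_mul_of_displacement_eq_tensorSum {E : Type*} [Field E] [Algebra k E] [Algebra A E]
    [IsScalarTower k A E] [FaithfulSMul A E] (hx : AlgebraicIndependent k x) {τ : E}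
    (hτ : Transcendental k τ) (hfix : ∀ g, aeval τ (β g) = algebraMap A E g) {f g : A}
    {r s : ι → k[X]} (hf : displacement β f = tensorSum x r) (hg : displacement β g = tensorSum x s)
    (a b : ι) : r a * s b = r b * s a := by
  have hzero : ∀ {g : A} {s : ι → k[X]}, displacement β g = tensorSum x s →
      ∑ j, aeval τ (s j) * algebraMap A E (x j) = 0 := fun {g s} h ↦ by
    rw [← aeval_tensorSum, ← h, displacement_apply, map_sub, aeval_C, hfix, sub_self]
  exact mul_eq_mul_of_sum_eq_zero
    (hx.map' (f := IsScalarTower.toAlgHom k A E) (FaithfulSMul.algebraMap_injective A E))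
    hτ (hzero hf) (hzero hg) a b

theorem exists_ne_zero_of_displacement_eq_tensorSum {f : A} (hf : f ∉ gaInvariants β)
    {r : ι → k[X]} (hr : displacement β f = tensorSum x r) : ∃ b, r b ≠ 0 := by
  by_contra! h
  refine hf (displacement_eq_zero.1 ?_)
  simp only [hr, tensorSum, h, Polynomial.map_zero, zero_mul, Finset.sum_const_zero]

theorem isLocalSlice_of_mem_span_range [IsDomain A] (hβ : IsGaCoaction β)
    (hlin : ∀ i m, (β (x i)).coeff m ∈ Submodule.span k (Set.range x))
    (hminor : ∀ {f g : A} {r s : ι → k[X]}, displacement β f = tensorSum x r →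
      displacement β g = tensorSum x s → ∀ a b, r a * s b = r b * s a) {g : A}
    (hg : g ∈ Submodule.span k (Set.range x)) (hginv : g ∉ gaInvariants β) : IsLocalSlice β g := by
  obtain ⟨f, hfV, hf, -⟩ := hβ.exists_isLocalSlice _ (fun _ ↦ coeff_mem_span_range hlin)
    ⟨g, hg, hginv⟩
  obtain ⟨r, hr⟩ := exists_displacement_eq_tensorSum hlin hfV
  obtain ⟨s, hs⟩ := exists_displacement_eq_tensorSum hlin hg
  obtain ⟨a, ha⟩ := exists_ne_zero_of_displacement_eq_tensorSum hf.notMem hr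
  have hr0 : tensorSum (fun j ↦ displacement β (x j)) r = 0 :=
    forall_coeff_tensorSum_mem_iff.1 fun m ↦ hr ▸ hf.coeff_mem m
  refine ⟨hginv, ?_⟩
  rw [hs]
  refine forall_coeff_tensorSum_mem_iff.2 (tensorSum_eq_zero_of_mul_eq_mul ha (fun b ↦ ?_) hr0)
  rw [hminor hr hs, mul_comm]

theorem IsLocalSlice.exists_forall_ne_C_mul {f : A} (hf : IsLocalSlice β f)
    (hped : largePedestalIdeal β = ⊥) {r : ι → k[X]} (hr : displacement β f = tensorSum x r)
    {b : ι} (hadd : IsAdditivePoly (r b)) (hb : r b ≠ 0) : ∃ a, ∀ μ : k, r a ≠ C μ * r b := by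
  by_contra! h
  choose μ hμ using h
  set y := ∑ a, μ a • x a with hy
  have hline : displacement β f = (r b).map (algebraMap k A) * C y := by
    have hC : C y = tensorSum x fun a ↦ C (μ a) := by
      simp only [hy, tensorSum, map_sum, map_C, Algebra.smul_def, C_mul]
    rw [hr, hC, mul_tensorSum]
    exact congrArg _ (funext fun a ↦ (hμ a).trans (mul_comm _ _))
  have hyinv : y ∈ gaInvariants β := by
    have hmem := (gaInvariants β).smul_mem (hf.coeff_mem (r b).natDegree) (r b).leadingCoeff⁻¹
    rwa [hline, coeff_mul_C, coeff_map, coeff_natDegree, ← Algebra.smul_def, smul_smul,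
      inv_mul_cancel₀ (leadingCoeff_ne_zero.2 hb), one_smul] at hmem
  have hy0 : y = 0 := eq_zero_of_displacement_eq hped hyinv hadd hb hline
  rw [hy0, C_0, mul_zero] at hline
  exact hf.notMem (displacement_eq_zero.1 hline)

end Fintype

theorem exists_sub_smul_mem_gaInvariants [Finite ι] [IsDomain A] [IsIntegrallyClosedIn k A]
    [IsIntegrallyClosed A] (hβ : IsGaCoaction β) (hped : largePedestalIdeal β = ⊥)
    (hx : AlgebraicIndependent k x)
    (hlin : ∀ i m, (β (x i)).coeff m ∈ Submodule.span k (Set.range x)) {f g : A}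
    (hf : f ∈ Submodule.span k (Set.range x)) (hg : g ∈ Submodule.span k (Set.range x))
    (hfinv : f ∉ gaInvariants β) : ∃ μ : k, g - μ • f ∈ gaInvariants β := by
  cases nonempty_fintype ι
  by_cases hginv : g ∈ gaInvariants β
  · exact ⟨0, by rwa [zero_smul, sub_zero]⟩
  obtain ⟨τ, hτ, hfix⟩ := exists_transcendental_aeval_eq hβ hped ⟨f, hfinv⟩
  have hminor {f g : A} {r s : ι → k[X]} (hr : displacement β f = tensorSum x r)
      (hs : displacement β g = tensorSum x s) (a b : ι) : r a * s b = r b * s a :=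
    mul_eq_mul_of_displacement_eq_tensorSum hx hτ hfix hr hs a b
  have hadd {g : A} (hg : g ∈ Submodule.span k (Set.range x)) (hginv : g ∉ gaInvariants β)
      {s : ι → k[X]} (hs : displacement β g = tensorSum x s) (j : ι) : IsAdditivePoly (s j) :=
    hβ.isAdditivePoly_of_displacement_eq_tensorSum hx.linearIndependent hs
      (isLocalSlice_of_mem_span_range hβ hlin hminor hg hginv).coeff_mem j
  obtain ⟨r, hr⟩ := exists_displacement_eq_tensorSum hlin hf
  obtain ⟨s, hs⟩ := exists_displacement_eq_tensorSum hlin hg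
  obtain ⟨b, hb⟩ := exists_ne_zero_of_displacement_eq_tensorSum hfinv hr
  obtain ⟨a, ha⟩ := (isLocalSlice_of_mem_span_range hβ hlin hminor hf hfinv).exists_forall_ne_C_mul
    hped hr (hadd hf hfinv hr b) hb
  obtain ⟨μ, hμ⟩ : ∃ μ : k, s b = C μ * r b :=
    ((hadd hf hfinv hr a).exists_eq_C_mul_or_of_mul_eq_mul (hadd hf hfinv hr b)
      (hadd hg hginv hs a) (hadd hg hginv hs b) hb (hminor hr hs a b)).resolve_left
      fun ⟨μ, h⟩ ↦ ha μ h
  have hrow (j : ι) : s j = C μ * r j :=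
    mul_left_cancel₀ hb (by rw [← hminor hr hs j b, hμ]; ring)
  refine ⟨μ, displacement_eq_zero.1 ?_⟩
  rw [map_sub, map_smul, hr, hs, funext hrow, ← mul_tensorSum, map_C, Algebra.smul_def, sub_eq_zero]
  rfl

end LinearForms

section Line

variable {k A : Type*} [CommRing k] [CommRing A] [Algebra k A] {β : A →ₐ[k] A[X]}

theorem apply_aeval_eq_comp {R : Subalgebra k A} (hR : R ≤ gaInvariants β) (u : A) (p : R[X]) :
    β (aeval u p) = (p.map (algebraMap R A)).comp (β u) := by
  induction p using Polynomial.induction_on' with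
  | add p q hp hq => simp only [map_add, hp, hq, Polynomial.map_add, add_comp]
  | monomial m a =>
    rw [aeval_monomial, map_mul, map_pow, map_monomial, monomial_comp,
      mem_gaInvariants.1 (hR a.2 : algebraMap R A a ∈ gaInvariants β)]

theorem IsGaCoaction.gaInvariants_le_of_sup_adjoin_eq_top [IsDomain A]
    (hβ : IsGaCoaction β) {R : Subalgebra k A} (hR : R ≤ gaInvariants β) {u : A}
    (hu : u ∉ gaInvariants β) (htop : R ⊔ Algebra.adjoin k {u} = ⊤) : gaInvariants β ≤ R := by
  intro g hg
  obtain ⟨p, rfl⟩ : ∃ p : R[X], aeval u p = g := by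
    rw [← AlgHom.mem_range, ← Algebra.adjoin_singleton_eq_range_aeval,
      ← Subalgebra.mem_restrictScalars k, Algebra.restrictScalars_adjoin, Algebra.adjoin_union,
      Algebra.adjoin_eq, htop]
    exact Algebra.mem_top
  have hdeg := congrArg natDegree (apply_aeval_eq_comp hR u p)
  rw [mem_gaInvariants.1 hg, natDegree_C, natDegree_comp,
    natDegree_map_eq_of_injective Subtype.val_injective] at hdeg
  have hp : p.natDegree = 0 := (mul_eq_zero.1 hdeg.symm).resolve_right (hβ.natDegree_pos.2 hu).ne'
  rw [eq_C_of_natDegree_eq_zero hp, aeval_C]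
  exact (p.coeff 0).2

theorem sup_adjoin_singleton_eq_top {ι : Type*} {x : ι → A}
    (hx : Algebra.adjoin k (Set.range x) = ⊤) {R : Subalgebra k A} {u : A}
    (hR : ∀ j, ∃ μ : k, x j - μ • u ∈ R) : R ⊔ Algebra.adjoin k {u} = ⊤ := by
  rw [← top_le_iff, ← hx, Algebra.adjoin_le_iff, Set.range_subset_iff]
  intro j
  obtain ⟨μ, hμ⟩ := hR j
  rw [← sub_add_cancel (x j) (μ • u)]
  exact add_mem (le_sup_left (a := R) hμ)
    (Subalgebra.smul_mem _ (le_sup_right (a := R) (Algebra.self_mem_adjoin_singleton k u)) μ)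

end Line

theorem stmt9_general {k ι : Type*} [Field k] [Finite ι]
    (β : MvPolynomial ι k →ₐ[k] (MvPolynomial ι k)[X]) (hβ : IsGaCoaction β)
    (hlin : ∀ i m, (β (MvPolynomial.X i)).coeff m ∈
      Submodule.span k (Set.range (MvPolynomial.X : ι → MvPolynomial ι k)))
    (hped : largePedestalIdeal β = ⊥) :
    gaInvariants β = Algebra.adjoin k {ℓ | ℓ ∈ Submodule.span k
      (Set.range (MvPolynomial.X : ι → MvPolynomial ι k)) ∧ β ℓ = C ℓ} := by
  have := isIntegrallyClosedIn_mvPolynomial k ι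
  set V := Submodule.span k (Set.range (MvPolynomial.X : ι → MvPolynomial ι k))
  have hXV (i : ι) : MvPolynomial.X i ∈ V := Submodule.subset_span ⟨i, rfl⟩
  refine le_antisymm ?_ (Algebra.adjoin_le fun ℓ hℓ ↦ hℓ.2)
  by_cases hne : ∃ i, MvPolynomial.X i ∉ gaInvariants β
  · obtain ⟨i, hi⟩ := hne
    refine hβ.gaInvariants_le_of_sup_adjoin_eq_top (Algebra.adjoin_le fun ℓ hℓ ↦ hℓ.2) hi ?_
    refine sup_adjoin_singleton_eq_top MvPolynomial.adjoin_range_X fun j ↦ ?_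
    obtain ⟨μ, hμ⟩ := exists_sub_smul_mem_gaInvariants hβ hped
      (MvPolynomial.algebraicIndependent_X ι k) hlin (hXV i) (hXV j) hi
    exact ⟨μ, Algebra.subset_adjoin ⟨sub_mem (hXV j) (V.smul_mem μ (hXV i)), hμ⟩⟩
  · push Not at hne
    exact le_top.trans (MvPolynomial.adjoin_range_X.symm.le.trans
      (Algebra.adjoin_mono (Set.range_subset_iff.2 fun i ↦ ⟨hXV i, hne i⟩)))

/-- Theorem: zero large pedestal ideal forces trivial invariants:
for a linear upper-triangular coaction on `k[x₁,…,xₙ]` whose large pedestal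
ideal is zero, the ring of invariants is generated by the invariant linear
forms. -/
theorem stmt9 {k : Type*} [Field k] [IsAlgClosed k] {n : ℕ}
    (β : MvPolynomial (Fin n) k →ₐ[k] Polynomial (MvPolynomial (Fin n) k))
    (hβ : IsGaCoaction β)
    (q : Fin n → Fin n → Polynomial k)
    (hup : ∀ i : Fin n, β (MvPolynomial.X i) =
      Polynomial.C (MvPolynomial.X i) +
        ∑ j ∈ Finset.Iio i,
          (q i j).map (algebraMap k (MvPolynomial (Fin n) k)) *
            Polynomial.C (MvPolynomial.X j))
    (hped : ∀ (g h : MvPolynomial (Fin n) k) (c : Polynomial k),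
      IsAdditivePoly c → c ≠ 0 →
      β h = Polynomial.C h →
      β g = Polynomial.C g +
        c.map (algebraMap k (MvPolynomial (Fin n) k)) * Polynomial.C h →
      h = 0) :
    ∀ f : MvPolynomial (Fin n) k,
      β f = Polynomial.C f ↔
        f ∈ Algebra.adjoin k {ℓ : MvPolynomial (Fin n) k |
          ℓ ∈ Submodule.span k
            (Set.range (MvPolynomial.X : Fin n → MvPolynomial (Fin n) k)) ∧
          β ℓ = Polynomial.C ℓ} := by
  exact SetLike.ext_iff.1 (stmt9_general β hβ
    (fun i ↦ hup i ▸ coeff_C_add_sum_mem_span_range i _ (q i))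
    (largePedestalIdeal_eq_bot_iff.2 hped))
end

section
/- Let k be an algebraically closed field, A a finitely generated integral domain over k with a 𝔾ₐ-coaction β, and let (g,h) be a principle pair with h ≠ 0, i.e. h ∈ A^{𝔾ₐ} and β(g) = g + t·h. For a ∈ A let π(a) ∈ A_h denote the result of mapping the coefficients of β(a) into the localization A_h and evaluating the variable t at −g/h. Then π(a) is invariant for every a ∈ A: β_h(π(a)) is the constant polynomial π(a). -/
open Polynomial

/-!
Read `β a` as `t ↦ a(t · p)`, so that `(β a)(x)` is `a` moved for the time `x`. Coassociativity
says that the coaction translates this time: `β_S ((β a)(x)) = (β a)(t + β_S x)`. The quotient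
`y = g/h` is a slice, `β_S y = y + t`, so at `x = -y` the two occurrences of `t` cancel.
-/

theorem eval₂_coaddSubst {R T : Type*} [CommSemiring R] [CommSemiring T] (f : R[X] →+* T) (y : T)
    (p : R[X]) :
    (coaddSubst p).eval₂ f y = p.eval₂ (f.comp C) (f X + y) := by
  rw [coaddSubst, ← coe_eval₂RingHom f y, hom_eval₂, ← RingHom.comp_assoc, eval₂RingHom_comp_C,
    map_add, coe_eval₂RingHom, eval₂_C, eval₂_X]

theorem isRightRegular_C {R : Type*} [Semiring R] {r : R} (hr : IsRightRegular r) :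
    IsRightRegular (C r) := by
  intro p q hpq
  ext n
  apply hr
  simpa only [coeff_mul_C] using congrArg (coeff · n) hpq

theorem map_eq_C_add_X_of_mul_eq {S : Type*} [CommSemiring S] {βS : S →+* S[X]} {c d y : S}
    (hc : βS c = C c) (hd : βS d = C d + X * C c) (hreg : IsRightRegular c) (hy : y * c = d) :
    βS y = C y + X := by
  apply isRightRegular_C hreg
  calc βS y * C c = βS d := by rw [← hc, ← map_mul, hy]
    _ = (C y + X) * C c := by rw [hd, ← hy, C_mul, add_mul]

namespace IsGaCoaction

variable {k A S : Type*} [CommSemiring k] [CommSemiring A] [Algebra k A] {β : A →ₐ[k] A[X]}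

theorem map_eval₂ [CommSemiring S] {φ : A →+* S} {βS : S →+* S[X]} (hβ : IsGaCoaction β)
    (hext : ∀ a, βS (φ a) = (β a).map φ) (x : S) (a : A) :
    βS ((β a).eval₂ φ x) = (β a).eval₂ (C.comp φ) (X + βS x) := by
  have hcomp : βS.comp φ = (mapRingHom φ).comp β.toRingHom := RingHom.ext hext
  calc βS ((β a).eval₂ φ x)
      = ((β a).map β.toRingHom).eval₂ (mapRingHom φ) (βS x) := by
        rw [hom_eval₂, hcomp, eval₂_map]
    _ = (coaddSubst (β a)).eval₂ (mapRingHom φ) (βS x) := by rw [hβ.2]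
    _ = (β a).eval₂ (C.comp φ) (X + βS x) := by
        rw [eval₂_coaddSubst, mapRingHom_comp_C, coe_mapRingHom, map_X]

theorem map_eval₂_neg_of_map_eq_C_add_X [CommRing S] {φ : A →+* S} {βS : S →+* S[X]}
    (hβ : IsGaCoaction β) (hext : ∀ a, βS (φ a) = (β a).map φ) {y : S} (hy : βS y = C y + X)
    (a : A) :
    βS ((β a).eval₂ φ (-y)) = C ((β a).eval₂ φ (-y)) := by
  have hcancel : X + βS (-y) = C (-y) := by
    rw [map_neg, hy, C_neg]
    ring
  rw [hβ.map_eval₂ hext, hcancel, ← hom_eval₂]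

end IsGaCoaction

theorem stmt11_general {k A S : Type*} [CommSemiring k] [CommSemiring A] [Algebra k A] [CommRing S]
    {β : A →ₐ[k] A[X]} (hβ : IsGaCoaction β) {g h : A} (hinv : β h = C h)
    (hpair : β g = C g + X * C h) {φ : A →+* S} {βS : S →+* S[X]}
    (hext : ∀ a, βS (φ a) = (β a).map φ) (hreg : IsRightRegular (φ h)) {y : S}
    (hy : y * φ h = φ g) (a : A) :
    βS ((β a).eval₂ φ (-y)) = C ((β a).eval₂ φ (-y)) := by
  have hφh : βS (φ h) = C (φ h) := by rw [hext, hinv, map_C]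
  have hφg : βS (φ g) = C (φ g) + X * C (φ h) := by
    rw [hext, hpair, Polynomial.map_add, Polynomial.map_mul, map_X, map_C, map_C]
  exact hβ.map_eval₂_neg_of_map_eq_C_add_X hext (map_eq_C_add_X_of_mul_eq hφh hφg hreg hy) a

/-- Dixmier-type map: if `(g,h)` is a principle pair
(`β(g) = g + t·h`, `h ≠ 0` invariant) and `π(a)` is obtained by pushing the
coefficients of `β(a)` into the localization `A_h = S` and evaluating `t` at
`−g/h`, then `π(a)` is invariant for the extended coaction `β_h`. -/
theorem stmt11 {k : Type*} [Field k] [IsAlgClosed k]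
    {A : Type*} [CommRing A] [IsDomain A] [Algebra k A]
    (hfg : Algebra.FiniteType k A)
    (β : A →ₐ[k] Polynomial A) (hβ : IsGaCoaction β)
    (g h : A) (hh0 : h ≠ 0)
    (hinv : β h = Polynomial.C h)
    (hpair : β g = Polynomial.C g + Polynomial.X * Polynomial.C h)
    (S : Type*) [CommRing S] [Algebra A S] [Algebra k S] [IsScalarTower k A S]
    [IsLocalization.Away h S]
    (βS : S →ₐ[k] Polynomial S) (hβS : IsGaCoaction βS)
    (hext : ∀ a : A, βS (algebraMap A S a) = (β a).map (algebraMap A S)) :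
    ∀ a : A,
      βS ((β a).eval₂ (algebraMap A S)
          (-(IsLocalization.mk' S g ⟨h, Submonoid.mem_powers h⟩))) =
        Polynomial.C ((β a).eval₂ (algebraMap A S)
          (-(IsLocalization.mk' S g ⟨h, Submonoid.mem_powers h⟩))) :=
  stmt11_general (βS := βS.toRingHom) hβ hinv hpair hext
    (IsLocalization.Away.algebraMap_isUnit h).isRegular.right (IsLocalization.mk'_spec S g _)
end
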